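/- Let n ≥ 3 and 1 ≤ k < n/2 be integers and let P = {p₁,…,p_q} ⊂ ℝⁿ be a finite nonempty set of points, each of which has negative n-th coordinate. Suppose v is a positive C⁴ function on ℝⁿ \ P such that at every point the conformal Schouten matrix A_v lies in the cone Γ_k⁺ and satisfies σ_k(A_v) = binom(n,k)·(1/2)^k · v^{4k/(n−2)}; suppose the Kelvin transform w(y) := |y|^{2−n} v(y/|y|²) extends to a C² function on a neighborhood of the origin with w(0) > 0; and suppose v(x) → +∞ as x → p_i for each i. Then ∂v/∂x_n(x) < 0 for every x in the hyperplane H₀ = {x ∈ ℝⁿ : x_n = 0}; in particular, the second fundamental form of H₀ with respect to the conformal metric g_v = v^{4/(n−2)} g_E, which equals −(2/(n−2)) v⁻¹ (∂v/∂x_n) times the induced metric, is positive definite, i.e. H₀ is geodesically convex with respect to g_v. -/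

import Mathlib

open Metric Set Filter

/-- The `j`-th elementary symmetric function of the eigenvalues of a matrix,
i.e. `(-1)^j` times the coefficient of `X^(n-j)` in the characteristic polynomial. -/
noncomputable def sigmaK {n : ℕ} (j : ℕ) (M : Matrix (Fin n) (Fin n) ℝ) : ℝ :=
  (-1 : ℝ) ^ j * (Matrix.charpoly M).coeff (n - j)

/-- The cone `Γ_k⁺`: all the elementary symmetric functions `σ_1, …, σ_k` are positive. -/
def gammaKPlus {n : ℕ} (k : ℕ) (M : Matrix (Fin n) (Fin n) ℝ) : Prop :=
  ∀ j : ℕ, 1 ≤ j → j ≤ k → 0 < sigmaK j M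

/-- Partial derivative of a function on Euclidean space in the `i`-th coordinate direction. -/
noncomputable def pd {n : ℕ} (v : EuclideanSpace ℝ (Fin n) → ℝ) (i : Fin n)
    (x : EuclideanSpace ℝ (Fin n)) : ℝ :=
  fderiv ℝ v x (EuclideanSpace.single i 1)

/-- The conformal Schouten matrix
`A_v = -(2/(n-2)) v⁻¹ ∇²v + (2n/(n-2)²) v⁻² ∇v ⊗ ∇v - (2/(n-2)²) v⁻² |∇v|² Iₙ`. -/
noncomputable def schoutenMatrix {n : ℕ} (v : EuclideanSpace ℝ (Fin n) → ℝ)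
    (x : EuclideanSpace ℝ (Fin n)) : Matrix (Fin n) (Fin n) ℝ :=
  fun i j =>
    -(2 / ((n : ℝ) - 2)) * (v x)⁻¹ * pd (pd v j) i x
      + (2 * (n : ℝ) / ((n : ℝ) - 2) ^ 2) * ((v x)⁻¹) ^ 2 * pd v i x * pd v j x
      - (2 / ((n : ℝ) - 2) ^ 2) * ((v x)⁻¹) ^ 2 * (∑ l, (pd v l x) ^ 2)
        * (if i = j then (1 : ℝ) else 0)

/-- The Kelvin transform `w(y) = |y|^{2-n} v(y/|y|²)` extends to a positive `C^m` function
on a neighbourhood of the origin. -/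
def kelvinExtendsPos {n : ℕ} (v : EuclideanSpace ℝ (Fin n) → ℝ) (m : ℕ) : Prop :=
  ∃ (w : EuclideanSpace ℝ (Fin n) → ℝ) (ε : ℝ), 0 < ε ∧
    ContDiffOn ℝ m w (ball 0 ε) ∧
    (∀ y ∈ ball (0 : EuclideanSpace ℝ (Fin n)) ε, 0 < w y) ∧
    ∀ y ∈ ball (0 : EuclideanSpace ℝ (Fin n)) ε, y ≠ 0 →
      w y = ‖y‖ ^ ((2 : ℝ) - n) * v ((‖y‖ ^ 2)⁻¹ • y)

/-- The Kelvin transform `w(y) = |y|^{2-n} v(y/|y|²)` extends to a `C²` function on a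
neighbourhood of the origin which is positive at the origin. -/
def kelvinExtendsC2PosAtZero {n : ℕ} (v : EuclideanSpace ℝ (Fin n) → ℝ) : Prop :=
  ∃ (w : EuclideanSpace ℝ (Fin n) → ℝ) (ε : ℝ), 0 < ε ∧
    ContDiffOn ℝ 2 w (ball 0 ε) ∧ 0 < w 0 ∧
    ∀ y ∈ ball (0 : EuclideanSpace ℝ (Fin n)) ε, y ≠ 0 →
      w y = ‖y‖ ^ ((2 : ℝ) - n) * v ((‖y‖ ^ 2)⁻¹ • y)

open Topology

/-!
The function `u = v ^ (-2 / (n - 2))` turns the equation into `σ_k(u ∇²u - ½|∇u|² I) = const`, which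
is invariant under the Kelvin transforms `u ↦ (|x - c| / r)² u(inversion c r x)`, and `u` extends by
`0` to the singular points. Let `q` be the mirror image of a singular point `p` in the hyperplane.
The inversion about `p` fixing `q` maps the closed half-space around `q`, with infinity added, to
the closed ball about `q` whose boundary contains `p`. The Kelvin transform `U` of `u` is a positive
solution on that ball, regular at `p` because `v` is regular at infinity, and `u p = 0` says that
`U` grows slower than `|x|²`. Hence the Kelvin transforms of `U` about `q` vanish at `q`, and lie
below `U` inside small spheres centred there. Moving the sphere outwards, the strong maximum
principle and the Hopf lemma, valid since `σ_k` is elliptic on `Γ_k⁺`, keep the comparison strict up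
to the boundary of the ball. On that boundary it says that `U` has radial derivative less than `U`
(in units of the radius), which pulled back by the inversion is the strict sign of the normal
derivative of `u`.
-/

section ElementarySymmetric

open Polynomial

lemma esymm_pos {R : Type*} [CommSemiring R] [PartialOrder R] [IsStrictOrderedRing R]
    {s : Multiset R} (hs : ∀ x ∈ s, 0 < x) {j : ℕ} (hj : j ≤ s.card) : 0 < s.esymm j := by
  have hprod : ∀ x ∈ (s.powersetCard j).map Multiset.prod, 0 < x := by
    simp only [Multiset.mem_map, Multiset.mem_powersetCard]
    rintro _ ⟨t, ⟨hts, -⟩, rfl⟩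
    exact Multiset.prod_pos fun x hx => hs x (Multiset.mem_of_le hts hx)
  obtain ⟨x, hx⟩ := Multiset.card_pos_iff_exists_mem.1 <|
    show 0 < ((s.powersetCard j).map Multiset.prod).card by
      simpa using Nat.choose_pos hj
  exact (hprod x hx).trans_le (Multiset.single_le_sum (fun y hy => (hprod y hy).le) x hx)

lemma splits_derivative {p : ℝ[X]} (hp : p.Splits) : (derivative p).Splits := by
  rw [splits_iff_card_roots] at *
  have hrolle := card_roots_le_derivative p
  have hcard := card_roots' (derivative p)
  have hdeg := natDegree_derivative_le p
  omega

lemma splits_iterate_derivative {p : ℝ[X]} (hp : p.Splits) (m : ℕ) :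
    (derivative^[m] p).Splits := by
  induction m with
  | zero => exact hp
  | succ m ih => rw [Function.iterate_succ_apply']; exact splits_derivative ih

lemma coeff_pos_of_splits {p : ℝ[X]} (hp : p.Splits) (hnonneg : ∀ m, 0 ≤ p.coeff m)
    (hzero : 0 < p.coeff 0) {m : ℕ} (hm : m ≤ p.natDegree) : 0 < p.coeff m := by
  have hp0 : p ≠ 0 := by rintro rfl; simp at hzero
  have hneg_roots : ∀ x ∈ p.roots.map Neg.neg, 0 < x := by
    simp only [Multiset.mem_map]
    rintro _ ⟨x, hx, rfl⟩
    by_contra! hxneg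
    have hlt : p.coeff 0 * x ^ 0 ≤ p.eval x := by
      rw [eval_eq_sum_range]
      exact Finset.single_le_sum (f := fun i => p.coeff i * x ^ i)
        (fun i _ => mul_nonneg (hnonneg i) (pow_nonneg (by linarith) i)) (by simp)
    rw [(mem_roots hp0).1 hx] at hlt
    linarith
  rw [coeff_eq_esymm_roots_of_splits hp hm, mul_assoc, ← Multiset.esymm_neg]
  refine mul_pos ((hnonneg _).lt_of_ne' (leadingCoeff_ne_zero.2 hp0)) (esymm_pos hneg_roots ?_)
  rw [Multiset.card_map, splits_iff_card_roots.1 hp]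
  exact Nat.sub_le _ _

lemma det_add_smul_vecMulVec {R m : Type*} [CommRing R] [Fintype m] [DecidableEq m]
    (A : Matrix m m R) (u w : m → R) (t : R) :
    (A + t • Matrix.vecMulVec u w).det =
      A.det + t * ((A + Matrix.vecMulVec u w).det - A.det) := by
  let borderedMatrix (row : m ⊕ Unit → R) : Matrix (m ⊕ Unit) (m ⊕ Unit) R :=
    (Matrix.fromBlocks A (Matrix.replicateCol Unit u) 0 1).updateRow (Sum.inr ()) row
  have hschur (s : R) : (A + s • Matrix.vecMulVec u w).det =
      (borderedMatrix (Sum.elim (-s • w) 1)).det := by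
    rw [show borderedMatrix (Sum.elim (-s • w) 1) = Matrix.fromBlocks A
      (Matrix.replicateCol Unit u) (Matrix.replicateRow Unit (-s • w)) 1 by
        ext (i | i) (j | j) <;> simp [borderedMatrix], Matrix.det_fromBlocks_one₂₂]
    congr 1
    ext i j
    simp [Matrix.mul_apply, Matrix.vecMulVec_apply, mul_left_comm]
  have haffine (s : R) : (A + s • Matrix.vecMulVec u w).det =
      (borderedMatrix (Sum.elim 0 1)).det + s * (borderedMatrix (Sum.elim (-w) 0)).det := by
    rw [hschur, ← Matrix.det_updateRow_smul, ← Matrix.det_updateRow_add]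
    congr 2
    ext (j | j) <;> simp
  have h0 := haffine 0
  have h1 := haffine 1
  rw [zero_smul, add_zero, zero_mul, add_zero] at h0
  rw [one_smul, one_mul] at h1
  rw [haffine, h0, h1]
  ring

variable {n j k : ℕ} {M N : Matrix (Fin n) (Fin n) ℝ}

lemma sigmaK_eq_sum_minors (hj : j ≤ n) (M : Matrix (Fin n) (Fin n) ℝ) :
    sigmaK j M = ∑ s ∈ Finset.univ.powersetCard j,
      (M.submatrix (Subtype.val : s → Fin n) Subtype.val).det := by
  have hminors := M.charpoly_coeff_eq_sum_minors j (by simpa)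
  rw [Fintype.card_fin] at hminors
  rw [sigmaK, hminors, ← mul_assoc, ← mul_pow]
  norm_num

lemma sigmaK_smul (hj : j ≤ n) (t : ℝ) (M : Matrix (Fin n) (Fin n) ℝ) :
    sigmaK j (t • M) = t ^ j * sigmaK j M := by
  rw [sigmaK_eq_sum_minors hj, sigmaK_eq_sum_minors hj, Finset.mul_sum]
  refine Finset.sum_congr rfl fun s hs => ?_
  rw [← (Finset.mem_powersetCard.1 hs).2]
  simp [Matrix.submatrix_smul]

lemma sigmaK_eq_coeff_charpoly_neg (hj : j ≤ n) (M : Matrix (Fin n) (Fin n) ℝ) :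
    sigmaK j M = (-M).charpoly.coeff (n - j) := by
  have hsmul := sigmaK_smul hj (-1) (-M)
  rw [neg_one_smul, neg_neg] at hsmul
  rw [hsmul, sigmaK, ← mul_assoc, ← mul_pow]
  simp

lemma sigmaK_add_smul_vecMulVec (hj : j ≤ n) (M : Matrix (Fin n) (Fin n) ℝ) (u w : Fin n → ℝ)
    (t : ℝ) :
    sigmaK j (M + t • Matrix.vecMulVec u w) =
      sigmaK j M + t * (sigmaK j (M + Matrix.vecMulVec u w) - sigmaK j M) := by
  simp only [sigmaK_eq_sum_minors hj, ← Finset.sum_sub_distrib, Finset.mul_sum,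
    ← Finset.sum_add_distrib]
  exact Finset.sum_congr rfl fun s _ => det_add_smul_vecMulVec _ (u ∘ Subtype.val) _ t

lemma sigmaK_zero (M : Matrix (Fin n) (Fin n) ℝ) : sigmaK 0 M = 1 := by
  simp [sigmaK_eq_sum_minors]

lemma sigmaK_one (hn : 1 ≤ n) (M : Matrix (Fin n) (Fin n) ℝ) : sigmaK 1 M = M.trace := by
  have : Nonempty (Fin n) := ⟨⟨0, hn⟩⟩
  simp [sigmaK, M.trace_eq_neg_charpoly_coeff]

lemma sigmaK_conj {Q Q' : Matrix (Fin n) (Fin n) ℝ} (hQ : Q * Q' = 1)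
    (M : Matrix (Fin n) (Fin n) ℝ) : sigmaK j (Q' * M * Q) = sigmaK j M := by
  rw [sigmaK, sigmaK, Matrix.charpoly_mul_comm, ← mul_assoc, hQ, one_mul]

open scoped Matrix.Norms.Elementwise in
lemma contDiff_sigmaK (hj : j ≤ n) :
    ContDiff ℝ ⊤ (sigmaK j : Matrix (Fin n) (Fin n) ℝ → ℝ) := by
  have hentry (a b : Fin n) : ContDiff ℝ ⊤ fun M : Matrix (Fin n) (Fin n) ℝ => M a b :=
    (contDiff_apply_apply (𝕜 := ℝ) (E := ℝ) a b :)
  rw [funext (sigmaK_eq_sum_minors hj)]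
  simp only [Matrix.det_apply, Matrix.submatrix_apply]
  exact ContDiff.sum fun s _ => ContDiff.sum fun τ _ =>
    (contDiff_prod fun a _ => hentry _ _).const_smul _

open scoped Matrix.Norms.Elementwise in
lemma continuous_sigmaK (hj : j ≤ n) :
    Continuous (sigmaK j : Matrix (Fin n) (Fin n) ℝ → ℝ) :=
  (contDiff_sigmaK hj).continuous

end ElementarySymmetric

section GardingCone

open Polynomial

variable {n j k : ℕ} {M N : Matrix (Fin n) (Fin n) ℝ} {e : Fin n → ℝ}

lemma gammaKPlus_of_le (hM : gammaKPlus k M) (hjk : j ≤ k) : gammaKPlus j M :=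
  fun i hi hij => hM i hi (hij.trans hjk)

/- The `(n - k)`-th derivative of `det (X + M)` is real-rooted by Rolle, and up to positive factors
its coefficients are `σ₀, …, σ_k`. -/
lemma gammaKPlus_of_sigmaK_nonneg (hkn : k ≤ n) (hM : M.IsHermitian)
    (hnonneg : ∀ i ≤ k, 0 ≤ sigmaK i M) (hpos : 0 < sigmaK k M) : gammaKPlus k M := by
  set p := derivative^[n - k] (-M).charpoly with hp
  have hfactor (m : ℕ) : 0 < ((m + (n - k)).descFactorial (n - k) : ℝ) :=
    mod_cast Nat.descFactorial_pos.2 (by omega)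
  have hcoeff {m : ℕ} (hm : m ≤ k) :
      p.coeff m = (m + (n - k)).descFactorial (n - k) * sigmaK (k - m) M := by
    rw [hp, coeff_iterate_derivative, nsmul_eq_mul, sigmaK_eq_coeff_charpoly_neg (by omega),
      show n - (k - m) = m + (n - k) by omega]
  have hcoeff_zero {m : ℕ} (hm : k < m) : p.coeff m = 0 := by
    rw [hp, coeff_iterate_derivative, coeff_eq_zero_of_natDegree_lt, smul_zero]
    rw [Matrix.charpoly_natDegree_eq_dim, Fintype.card_fin]
    omega
  have hdeg : k ≤ p.natDegree := by
    apply le_natDegree_of_ne_zero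
    rw [hcoeff le_rfl, Nat.sub_self, sigmaK_zero, mul_one]
    exact (hfactor k).ne'
  intro i _ hik
  have hcoeff_pos : 0 < p.coeff (k - i) := by
    refine coeff_pos_of_splits (splits_iterate_derivative hM.neg.splits_charpoly _) (fun m => ?_)
      ?_ ((Nat.sub_le k i).trans hdeg)
    · rcases le_or_gt m k with hm | hm
      · exact hcoeff hm ▸ mul_nonneg (hfactor m).le (hnonneg _ (Nat.sub_le k m))
      · exact (hcoeff_zero hm).ge
    · exact hcoeff (Nat.zero_le k) ▸ mul_pos (hfactor 0) hpos
  rw [hcoeff (Nat.sub_le k i), Nat.sub_sub_self hik] at hcoeff_pos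
  exact (pos_iff_pos_of_mul_pos hcoeff_pos).1 (hfactor _)

lemma isOpen_gammaKPlus (hkn : k ≤ n) :
    IsOpen {M : Matrix (Fin n) (Fin n) ℝ | gammaKPlus k M} := by
  have hset : {M : Matrix (Fin n) (Fin n) ℝ | gammaKPlus k M} =
      ⋂ i ∈ Finset.Icc 1 k, {M | 0 < sigmaK i M} := by
    ext M; simp [gammaKPlus]
  rw [hset]
  refine isOpen_biInter_finset fun i hi => ?_
  exact isOpen_lt continuous_const (continuous_sigmaK ((Finset.mem_Icc.1 hi).2.trans hkn))

lemma sigmaK_nonneg_of_mem_closure (hkn : k ≤ n) (hM : M ∈ closure {M | gammaKPlus k M})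
    (hjk : j ≤ k) : 0 ≤ sigmaK j M := by
  have hclosed : IsClosed {M : Matrix (Fin n) (Fin n) ℝ | 0 ≤ sigmaK j M} :=
    isClosed_le continuous_const (continuous_sigmaK (hjk.trans hkn))
  refine closure_minimal (fun N hN => ?_) hclosed hM
  rcases Nat.eq_zero_or_pos j with rfl | hj
  · exact zero_le_one.trans (sigmaK_zero N).ge
  · exact (hN j hj hjk).le

/- Within Hermitian matrices, the cone is a union of components of `{σ_k > 0}`. -/
lemma gammaKPlus_of_isPreconnected (hkn : k ≤ n) {S : Set (Matrix (Fin n) (Fin n) ℝ)}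
    (hS : IsPreconnected S) (hherm : ∀ N ∈ S, N.IsHermitian) (hpos : ∀ N ∈ S, 0 < sigmaK k N)
    (hMS : M ∈ S) (hM : gammaKPlus k M) (hNS : N ∈ S) : gammaKPlus k N := by
  refine hS.subset_of_closure_inter_subset (isOpen_gammaKPlus hkn) ⟨M, hMS, hM⟩ ?_ hNS
  rintro L ⟨hL, hLS⟩
  exact gammaKPlus_of_sigmaK_nonneg hkn (hherm L hLS)
    (fun i hi => sigmaK_nonneg_of_mem_closure hkn hL hi) (hpos L hLS)

lemma isHermitian_vecMulVec_self (e : Fin n → ℝ) : (Matrix.vecMulVec e e).IsHermitian := by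
  ext i j
  simp [Matrix.vecMulVec_apply, mul_comm]

/- Otherwise `σ_k` would stay positive along the ray `M - t • e eᵀ`, which would therefore remain
in the cone, although `σ₁` tends to `-∞` along it. -/
lemma sigmaK_lt_sigmaK_add_vecMulVec (hk : 1 ≤ k) (hkn : k ≤ n) (hM : M.IsHermitian)
    (hcone : gammaKPlus k M) (he : e ≠ 0) : sigmaK k M < sigmaK k (M + Matrix.vecMulVec e e) := by
  by_contra! hle
  let ray (t : ℝ) : Matrix (Fin n) (Fin n) ℝ := M + (-t) • Matrix.vecMulVec e e
  have hray_pos (t : ℝ) (ht : 0 ≤ t) : 0 < sigmaK k (ray t) := by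
    have hM_pos := hcone k hk le_rfl
    rw [sigmaK_add_smul_vecMulVec hkn]
    nlinarith
  have hray_cone (t : ℝ) (ht : 0 ≤ t) : gammaKPlus k (ray t) := by
    have hconn : IsPreconnected (ray '' Ici 0) :=
      isPreconnected_Ici.image ray (by fun_prop)
    refine gammaKPlus_of_isPreconnected hkn hconn ?_ ?_ ⟨0, self_mem_Ici, rfl⟩ (by simpa [ray])
      ⟨t, ht, rfl⟩
    · rintro _ ⟨s, -, rfl⟩
      exact hM.add ((isHermitian_vecMulVec_self e).smul (IsSelfAdjoint.all (-s)))
    · rintro _ ⟨s, hs, rfl⟩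
      exact hray_pos s hs
  have hee : 0 < e ⬝ᵥ e := by simpa using Matrix.dotProduct_self_star_pos_iff.2 he
  have htrace : 0 < M.trace := by simpa [sigmaK_one (hk.trans hkn)] using hcone 1 le_rfl hk
  have hray_trace := hray_cone (M.trace / (e ⬝ᵥ e)) (by positivity) 1 le_rfl hk
  rw [sigmaK_one (hk.trans hkn), Matrix.trace_add, Matrix.trace_smul, Matrix.trace_vecMulVec,
    smul_eq_mul, neg_mul, div_mul_cancel₀ _ hee.ne', add_neg_cancel] at hray_trace
  exact hray_trace.false

lemma sigmaK_le_sigmaK_add_vecMulVec (hk : 1 ≤ k) (hkn : k ≤ n) (hM : M.IsHermitian)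
    (hcone : gammaKPlus k M) (e : Fin n → ℝ) :
    sigmaK k M ≤ sigmaK k (M + Matrix.vecMulVec e e) := by
  rcases eq_or_ne e 0 with rfl | he
  · simp
  · exact (sigmaK_lt_sigmaK_add_vecMulVec hk hkn hM hcone he).le

lemma gammaKPlus_add_vecMulVec (hkn : k ≤ n) (hM : M.IsHermitian)
    (hcone : gammaKPlus k M) (e : Fin n → ℝ) : gammaKPlus k (M + Matrix.vecMulVec e e) :=
  fun j hj hjk => (hcone j hj hjk).trans_le <|
    sigmaK_le_sigmaK_add_vecMulVec hj (hjk.trans hkn) hM (gammaKPlus_of_le hcone hjk) e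

/-- Degenerate ellipticity of `σ_k` at `M`: adding a positive semidefinite matrix does not decrease
`σ_k`. It holds on `Γ_k⁺` and, unlike membership in `Γ_k⁺`, it passes to limits. -/
def SigmaKMonotoneAt (k : ℕ) (M : Matrix (Fin n) (Fin n) ℝ) : Prop :=
  ∀ N : Matrix (Fin n) (Fin n) ℝ, N.PosSemidef → sigmaK k M ≤ sigmaK k (M + N)

lemma sigmaKMonotoneAt_of_gammaKPlus (hk : 1 ≤ k) (hkn : k ≤ n) (hM : M.IsHermitian)
    (hcone : gammaKPlus k M) : SigmaKMonotoneAt k M := by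
  intro N hN
  obtain ⟨m, v, rfl⟩ := Matrix.posSemidef_iff_eq_sum_vecMulVec.1 hN
  simp only [star_trivial]
  suffices h : ∀ s : Finset (Fin m),
      (M + ∑ i ∈ s, Matrix.vecMulVec (v i) (v i)).IsHermitian ∧
      gammaKPlus k (M + ∑ i ∈ s, Matrix.vecMulVec (v i) (v i)) ∧
      sigmaK k M ≤ sigmaK k (M + ∑ i ∈ s, Matrix.vecMulVec (v i) (v i)) from
    (h Finset.univ).2.2
  intro s
  induction s using Finset.induction_on with
  | empty => simpa using ⟨hM, hcone⟩
  | insert a s ha ih =>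
    obtain ⟨hherm, hcone_s, hle⟩ := ih
    rw [Finset.sum_insert ha, add_comm (Matrix.vecMulVec _ _), ← add_assoc]
    exact ⟨hherm.add (isHermitian_vecMulVec_self _),
      gammaKPlus_add_vecMulVec hkn hherm hcone_s _,
      hle.trans (sigmaK_le_sigmaK_add_vecMulVec hk hkn hherm hcone_s _)⟩

lemma isClosed_sigmaKMonotoneAt (hkn : k ≤ n) :
    IsClosed {M : Matrix (Fin n) (Fin n) ℝ | SigmaKMonotoneAt k M} := by
  simp only [SigmaKMonotoneAt, ofPred_forall]
  exact isClosed_iInter fun N => isClosed_iInter fun _ => isClosed_le (continuous_sigmaK hkn)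
    ((continuous_sigmaK hkn).comp (continuous_add_const N))

lemma eventually_add_smul_lt {E : Type*} [NormedAddCommGroup E] [NormedSpace ℝ E] {f : E → ℝ}
    {f' : E →L[ℝ] ℝ} {x d : E} (hf : HasStrictFDerivAt f f' x) (hd : f' d < 0) :
    ∀ᶠ q : E × E × ℝ in 𝓝 (x, d, 0), 0 < q.2.2 → f (q.1 + q.2.2 • q.2.1) < f q.1 := by
  set K := ‖d‖ + 1
  have hKpos : 0 < K := by positivity
  have hslope : ∀ᶠ q : E × E × ℝ in 𝓝 (x, d, 0), f' q.2.1 < f' d / 2 :=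
    (by fun_prop : ContinuousAt (fun q : E × E × ℝ => f' q.2.1) (x, d, 0)).eventually_lt_const
      (show f' d < f' d / 2 by linarith)
  have hbounded : ∀ᶠ q : E × E × ℝ in 𝓝 (x, d, 0), ‖q.2.1‖ < K :=
    (by fun_prop : ContinuousAt (fun q : E × E × ℝ => ‖q.2.1‖) (x, d, 0)).eventually_lt_const
      (lt_add_one _)
  have htendsto : Tendsto (fun q : E × E × ℝ => (q.1 + q.2.2 • q.2.1, q.1)) (𝓝 (x, d, 0))
      (𝓝 (x, x)) := by
    have hcont : Continuous fun q : E × E × ℝ => (q.1 + q.2.2 • q.2.1, q.1) := by fun_prop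
    simpa using hcont.tendsto (x, d, 0)
  have herror := hf.isLittleO.def (c := -f' d / (2 * K)) (div_pos (by linarith) (by positivity))
  filter_upwards [hslope, hbounded, htendsto.eventually herror] with ⟨y, w, t⟩ hw hwK herr ht
  simp only [add_sub_cancel_left, map_smul, smul_eq_mul, norm_smul, Real.norm_of_nonneg ht.le]
    at herr ht hw hwK ⊢
  have hsmall : -f' d / (2 * K) * (t * ‖w‖) ≤ t * (-f' d / 2) :=
    calc -f' d / (2 * K) * (t * ‖w‖) = t * (-f' d / 2) * (‖w‖ / K) := by field_simp
      _ ≤ t * (-f' d / 2) := mul_le_of_le_one_right (mul_nonneg ht.le (by linarith))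
        ((div_le_one hKpos).2 hwK.le)
  have hdecrease := (abs_le.1 herr).2
  have := mul_lt_mul_of_pos_left hw ht
  linarith

open scoped Matrix.Norms.Elementwise in
lemma exists_eventually_sigmaK_add_smul_lt (hk : 1 ≤ k) (hkn : k ≤ n) (hM : M.IsHermitian)
    (hcone : gammaKPlus k M) (he : e ≠ 0) :
    ∃ θ : ℝ, 0 < θ ∧ ∀ᶠ q : Matrix (Fin n) (Fin n) ℝ × (Fin n → ℝ) × ℝ in 𝓝 (M, e, 0),
      0 < q.2.2 →
        sigmaK k (q.1 + q.2.2 • (θ • 1 - Matrix.vecMulVec q.2.1 q.2.1)) < sigmaK k q.1 := by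
  have hstrict := (contDiff_sigmaK (n := n) hkn).contDiffAt (x := M) |>.hasStrictFDerivAt (by simp)
  set D := fderiv ℝ (sigmaK k : Matrix (Fin n) (Fin n) ℝ → ℝ) M
  have hderiv : D (Matrix.vecMulVec e e) = sigmaK k (M + Matrix.vecMulVec e e) - sigmaK k M := by
    have hline := hstrict.hasFDerivAt.hasLineDerivAt (Matrix.vecMulVec e e)
    simp only [HasLineDerivAt, sigmaK_add_smul_vecMulVec hkn] at hline
    refine hline.unique ?_
    simpa using ((hasDerivAt_id (0 : ℝ)).mul_const _).const_add (sigmaK k M)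
  have hderiv_pos : 0 < D (Matrix.vecMulVec e e) :=
    hderiv ▸ sub_pos.2 (sigmaK_lt_sigmaK_add_vecMulVec hk hkn hM hcone he)
  obtain ⟨θ, hθ, hθD⟩ : ∃ θ : ℝ, 0 < θ ∧ D (θ • 1 - Matrix.vecMulVec e e) < 0 := by
    have hcont : ContinuousAt (fun θ : ℝ => D (θ • 1 - Matrix.vecMulVec e e)) 0 := by fun_prop
    have hneg := hcont.eventually_lt_const (u := 0) (by simpa using hderiv_pos)
    have hpos : ∀ᶠ θ : ℝ in 𝓝[>] 0, 0 < θ := eventually_mem_nhdsWithin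
    exact (hpos.and (hneg.filter_mono nhdsWithin_le_nhds)).exists
  have hcont : Continuous fun q : Matrix (Fin n) (Fin n) ℝ × (Fin n → ℝ) × ℝ =>
      (q.1, θ • (1 : Matrix (Fin n) (Fin n) ℝ) - Matrix.vecMulVec q.2.1 q.2.1, q.2.2) := by
    fun_prop
  exact ⟨θ, hθ, hcont.tendsto (M, e, 0) (eventually_add_smul_lt hstrict hθD)⟩

end GardingCone

section SecondDerivative

variable {E : Type*} [NormedAddCommGroup E] [NormedSpace ℝ E] {u w : E → ℝ} {x : E}

lemma differentiableAt_fderiv_of_contDiffAt (hu : ContDiffAt ℝ 2 u x) :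
    DifferentiableAt ℝ (fderiv ℝ u) x :=
  (hu.fderiv_right (m := 1) (by norm_num)).differentiableAt (by norm_num)

lemma continuousAt_fderiv_fderiv (hu : ContDiffAt ℝ 2 u x) :
    ContinuousAt (fderiv ℝ (fderiv ℝ u)) x :=
  ((hu.fderiv_right (m := 1) (by norm_num)).fderiv_right (m := 0) (by norm_num)).continuousAt

lemma hasFDerivAt_fderiv_apply (hu : ContDiffAt ℝ 2 u x) (a : E) :
    HasFDerivAt (fun y => fderiv ℝ u y a) ((fderiv ℝ (fderiv ℝ u) x).flip a) x := by
  simpa using (differentiableAt_fderiv_of_contDiffAt hu).hasFDerivAt.clm_apply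
    (hasFDerivAt_const a x)

lemma fderiv_fderiv_sub (hu : ContDiffAt ℝ 2 u x) (hw : ContDiffAt ℝ 2 w x) :
    fderiv ℝ (fderiv ℝ (u - w)) x = fderiv ℝ (fderiv ℝ u) x - fderiv ℝ (fderiv ℝ w) x := by
  have hsub : fderiv ℝ (u - w) =ᶠ[𝓝 x] fderiv ℝ u - fderiv ℝ w := by
    filter_upwards [hu.eventually (by simp), hw.eventually (by simp)] with y huy hwy
    exact fderiv_sub (huy.differentiableAt two_ne_zero) (hwy.differentiableAt two_ne_zero)
  rw [hsub.fderiv_eq, fderiv_sub (differentiableAt_fderiv_of_contDiffAt hu)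
    (differentiableAt_fderiv_of_contDiffAt hw)]

lemma deriv_deriv_comp_add_smul (hu : ContDiffAt ℝ 2 u x) (a : E) :
    deriv (deriv fun t : ℝ => u (x + t • a)) 0 = fderiv ℝ (fderiv ℝ u) x a a := by
  have hline (t : ℝ) : HasDerivAt (fun t : ℝ => x + t • a) a t := by
    simpa using ((hasDerivAt_id t).smul_const a).const_add x
  have hline_zero : Tendsto (fun t : ℝ => x + t • a) (𝓝 0) (𝓝 x) := by
    simpa using (hline 0).continuousAt.tendsto
  have hderiv : deriv (fun t : ℝ => u (x + t • a)) =ᶠ[𝓝 0] fun t => fderiv ℝ u (x + t • a) a := by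
    filter_upwards [hline_zero.eventually (hu.eventually (by simp))] with t ht
    exact ((ht.differentiableAt two_ne_zero).hasFDerivAt.comp_hasDerivAt t (hline t)).deriv
  rw [hderiv.deriv_eq]
  exact ((hasFDerivAt_fderiv_apply hu a).hasLineDerivAt a).lineDeriv

lemma fderiv_fderiv_apply_self_nonneg_of_isLocalMin (hu : ContDiffAt ℝ 2 u x)
    (hmin : IsLocalMin u x) (a : E) : 0 ≤ fderiv ℝ (fderiv ℝ u) x a a := by
  set f : ℝ → ℝ := fun t => u (x + t • a) with hf
  have hline : ContinuousAt (fun t : ℝ => x + t • a) 0 := by fun_prop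
  have hmin_f : IsLocalMin f 0 := by
    have hline_zero : Tendsto (fun t : ℝ => x + t • a) (𝓝 0) (𝓝 x) := by simpa using hline.tendsto
    simpa [IsLocalMin, IsMinFilter, hf] using hline_zero.eventually hmin
  have hcont : ContinuousAt f 0 :=
    ContinuousAt.comp (g := u) (by simpa using hu.continuousAt) hline
  rw [← deriv_deriv_comp_add_smul hu]
  by_contra! hneg
  have hmax_f := isLocalMax_of_deriv_deriv_neg hneg hmin_f.deriv_eq_zero hcont
  have hconst : f =ᶠ[𝓝 0] fun _ => f 0 := by
    filter_upwards [hmin_f, hmax_f] with t hge hle using le_antisymm hle hge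
  have hzero : deriv (deriv f) 0 = 0 := by rw [hconst.deriv.deriv_eq]; simp
  exact hneg.ne hzero

end SecondDerivative

section ConformalHessian

variable {n : ℕ} {u : EuclideanSpace ℝ (Fin n) → ℝ} {x : EuclideanSpace ℝ (Fin n)}

/-- The matrix `u ∇²u - ½ |∇u|² I`. For `u = v ^ (-2 / (n - 2))` it is `u² A_v`, where `A_v` is the
conformal Schouten matrix of `v`. -/
noncomputable def conformalHessian (u : EuclideanSpace ℝ (Fin n) → ℝ)
    (x : EuclideanSpace ℝ (Fin n)) : Matrix (Fin n) (Fin n) ℝ :=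
  u x • Matrix.of (fun i j => fderiv ℝ (fderiv ℝ u) x (EuclideanSpace.single i 1)
    (EuclideanSpace.single j 1)) - (‖fderiv ℝ u x‖ ^ 2 / 2) • (1 : Matrix (Fin n) (Fin n) ℝ)

lemma conformalHessian_apply (u : EuclideanSpace ℝ (Fin n) → ℝ) (x : EuclideanSpace ℝ (Fin n))
    (i j : Fin n) :
    conformalHessian u x i j =
      u x * fderiv ℝ (fderiv ℝ u) x (EuclideanSpace.single i 1) (EuclideanSpace.single j 1) -
        ‖fderiv ℝ u x‖ ^ 2 / 2 * (if i = j then 1 else 0) := by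
  simp [conformalHessian, Matrix.one_apply]

lemma dotProduct_conformalHessian_mulVec (u : EuclideanSpace ℝ (Fin n) → ℝ)
    (x a b : EuclideanSpace ℝ (Fin n)) :
    a.ofLp ⬝ᵥ (conformalHessian u x).mulVec b.ofLp =
      u x * fderiv ℝ (fderiv ℝ u) x a b - ‖fderiv ℝ u x‖ ^ 2 / 2 * inner ℝ a b := by
  have hexpand (c : EuclideanSpace ℝ (Fin n)) : c = ∑ i, c i • EuclideanSpace.single i (1 : ℝ) := by
    ext j; simp [Pi.single_apply]
  have hinner : inner ℝ a b = a.ofLp ⬝ᵥ b.ofLp := by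
    rw [PiLp.inner_apply]; simp [dotProduct, mul_comm]
  have hhess : fderiv ℝ (fderiv ℝ u) x a b = a.ofLp ⬝ᵥ (Matrix.of fun i j => fderiv ℝ (fderiv ℝ u) x
      (EuclideanSpace.single i 1) (EuclideanSpace.single j 1)).mulVec b.ofLp := by
    conv_lhs => rw [hexpand a, hexpand b]
    simp only [map_sum, map_smul, sum_apply, smul_apply, smul_eq_mul, dotProduct, Matrix.mulVec,
      Matrix.of_apply, Finset.mul_sum]
    rw [Finset.sum_comm]
    exact Finset.sum_congr rfl fun i _ => Finset.sum_congr rfl fun j _ => by ring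
  rw [hhess, hinner, conformalHessian, Matrix.sub_mulVec, Matrix.smul_mulVec, Matrix.smul_mulVec,
    Matrix.one_mulVec, dotProduct_sub, dotProduct_smul, dotProduct_smul, smul_eq_mul, smul_eq_mul]

lemma isHermitian_conformalHessian (hu : ContDiffAt ℝ 2 u x) :
    (conformalHessian u x).IsHermitian := by
  ext i j
  have hsymm := hu.isSymmSndFDerivAt (by simp) (EuclideanSpace.single i 1)
    (EuclideanSpace.single j 1)
  simp only [Matrix.conjTranspose_apply, star_trivial, conformalHessian_apply, hsymm, eq_comm]

lemma continuousAt_conformalHessian (hu : ContDiffAt ℝ 2 u x) :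
    ContinuousAt (conformalHessian u) x := by
  refine continuousAt_pi.2 fun i => continuousAt_pi.2 fun j => ?_
  simp only [conformalHessian_apply]
  have hgrad := (differentiableAt_fderiv_of_contDiffAt hu).continuousAt
  have hhess := continuousAt_fderiv_fderiv hu
  have hu := hu.continuousAt
  fun_prop

end ConformalHessian

section HopfBarrier

variable {E : Type*} [NormedAddCommGroup E] {z y : E} {ρ α : ℝ}

/-- The barrier of the Hopf lemma: with `d = ρ² - |y - z|²`, a defining function of the ball of
radius `ρ` about `z`, it is `d + α d²`. Its Hessian is large and positive in the radial direction
near the boundary sphere if `α` is large. -/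
def hopfBarrier (z : E) (ρ α : ℝ) (y : E) : ℝ :=
  (ρ ^ 2 - ‖y - z‖ ^ 2) + α * (ρ ^ 2 - ‖y - z‖ ^ 2) ^ 2

lemma hopfBarrier_le (hα : 0 ≤ α) (hy : y ∈ closedBall z ρ) :
    hopfBarrier z ρ α y ≤ ρ ^ 2 + α * (ρ ^ 2) ^ 2 := by
  have hle := pow_le_pow_left₀ (norm_nonneg _) (mem_closedBall_iff_norm.1 hy) 2
  have hd := sub_le_self (ρ ^ 2) (sq_nonneg ‖y - z‖)
  exact add_le_add hd (mul_le_mul_of_nonneg_left (pow_le_pow_left₀ (sub_nonneg.2 hle) hd 2) hα)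

lemma hopfBarrier_le_two_mul_sq (hy : y ∈ closedBall z ρ) (hα : α * (ρ ^ 2 - ‖y - z‖ ^ 2) ≤ 1) :
    hopfBarrier z ρ α y ≤ 2 * ρ ^ 2 := by
  have hle := pow_le_pow_left₀ (norm_nonneg _) (mem_closedBall_iff_norm.1 hy) 2
  unfold hopfBarrier
  nlinarith [mul_le_mul_of_nonneg_right hα (sub_nonneg.2 hle), sq_nonneg ‖y - z‖]

lemma hopfBarrier_of_mem_sphere (hy : y ∈ sphere z ρ) : hopfBarrier z ρ α y = 0 := by
  simp [hopfBarrier, mem_sphere_iff_norm.1 hy]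

variable [InnerProductSpace ℝ E]

lemma contDiff_hopfBarrier : ContDiff ℝ 2 (hopfBarrier z ρ α) := by
  have hnorm : ContDiff ℝ 2 fun y : E => ‖y - z‖ ^ 2 := (contDiff_id.sub contDiff_const).norm_sq ℝ
  exact (contDiff_const.sub hnorm).add (contDiff_const.mul ((contDiff_const.sub hnorm).pow 2))

lemma hasFDerivAt_hopfBarrier (z : E) (ρ α : ℝ) (y : E) :
    HasFDerivAt (hopfBarrier z ρ α)
      ((-2 * (1 + 2 * α * (ρ ^ 2 - ‖y - z‖ ^ 2))) • innerSL ℝ (y - z)) y := by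
  have hdist := (((hasFDerivAt_id y).sub_const z).norm_sq).const_sub (ρ ^ 2)
  refine (hdist.add ((hdist.pow 2).const_mul α)).congr_fderiv ?_
  ext a
  simp
  ring

lemma fderiv_fderiv_hopfBarrier (z : E) (ρ α : ℝ) (y a : E) :
    fderiv ℝ (fderiv ℝ (hopfBarrier z ρ α)) y a a =
      8 * α * inner ℝ (y - z) a ^ 2 - (2 + 4 * α * (ρ ^ 2 - ‖y - z‖ ^ 2)) * ‖a‖ ^ 2 := by
  have hfderiv : fderiv ℝ (hopfBarrier z ρ α) = fun y =>
      (-2 * (1 + 2 * α * (ρ ^ 2 - ‖y - z‖ ^ 2))) • innerSL ℝ (y - z) :=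
    funext fun y => (hasFDerivAt_hopfBarrier z ρ α y).fderiv
  have hsub := (hasFDerivAt_id (𝕜 := ℝ) y).sub_const z
  have hcoeff := (((hsub.norm_sq.const_sub (ρ ^ 2)).const_mul (2 * α)).const_add 1).const_mul (-2)
  have hprod := hcoeff.smul ((innerSL ℝ : E →L[ℝ] E →L[ℝ] ℝ).hasFDerivAt.comp y hsub)
  have hinner (b : E) : (innerSL ℝ : E →L[ℝ] E →L[ℝ] ℝ) b a = inner ℝ b a := rfl
  rw [hfderiv]
  refine (congrArg (fun L : E →L[ℝ] E →L[ℝ] ℝ => L a a) hprod.fderiv).trans ?_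
  simp [inner_sub_left, hinner]
  ring

lemma norm_fderiv_hopfBarrier_le (hα : 0 ≤ α) (hy : y ∈ closedBall z ρ)
    (hαd : α * (ρ ^ 2 - ‖y - z‖ ^ 2) ≤ 1) : ‖fderiv ℝ (hopfBarrier z ρ α) y‖ ≤ 6 * ρ := by
  have hnorm := mem_closedBall_iff_norm.1 hy
  have hd := mul_nonneg hα (sub_nonneg.2 (pow_le_pow_left₀ (norm_nonneg _) hnorm 2))
  rw [(hasFDerivAt_hopfBarrier z ρ α y).fderiv, norm_smul, innerSL_apply_norm, Real.norm_eq_abs]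
  gcongr
  exact abs_le.2 ⟨by linarith, by linarith⟩

lemma le_fderiv_fderiv_hopfBarrier (hαd : α * (ρ ^ 2 - ‖y - z‖ ^ 2) ≤ 1) (a : E) :
    8 * α * inner ℝ (y - z) a ^ 2 - 6 * ‖a‖ ^ 2 ≤
      fderiv ℝ (fderiv ℝ (hopfBarrier z ρ α)) y a a := by
  rw [fderiv_fderiv_hopfBarrier]
  gcongr
  linarith

/- The minimum of `f - ε • hopfBarrier z ρ α` over the intersection of the two balls cannot be a
negative interior minimum, and on both boundary parts the difference is nonnegative. -/
lemma mul_hopfBarrier_le_of_forall_not_isLocalMin [ProperSpace E] {f : E → ℝ} {x₀ : E} {ε δ : ℝ}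
    (hcont : ∀ y ∈ closedBall x₀ δ, ContinuousAt f y) (hnonneg : ∀ y ∈ closedBall z ρ, 0 ≤ f y)
    (hsphere : ∀ y ∈ closedBall z ρ ∩ sphere x₀ δ, ε * hopfBarrier z ρ α y < f y)
    (hcontact : ∀ y ∈ closedBall z ρ ∩ closedBall x₀ δ, f y ≤ ε * hopfBarrier z ρ α y →
      ¬ IsLocalMin (f - ε • hopfBarrier z ρ α) y)
    (hy : y ∈ closedBall z ρ ∩ closedBall x₀ δ) : ε * hopfBarrier z ρ α y ≤ f y := by
  set F := f - ε • hopfBarrier z ρ α with hF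
  obtain ⟨x, ⟨hxz, hxδ⟩, hmin⟩ := ((isCompact_closedBall z ρ).inter_right
    isClosed_closedBall).exists_isMinOn (f := F) ⟨y, hy⟩ fun y hy => ((hcont y hy.2).sub
      (contDiff_hopfBarrier.continuous.continuousAt.const_smul ε)).continuousWithinAt
  suffices hFx : 0 ≤ F x by simpa [hF] using hFx.trans (hmin hy)
  by_contra! hneg
  have hfx : f x < ε * hopfBarrier z ρ α x := by simpa [hF] using hneg
  have hxz_lt : x ∈ ball z ρ := lt_of_le_of_ne hxz fun hx => by
    rw [hopfBarrier_of_mem_sphere hx, mul_zero] at hfx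
    exact (hnonneg x hxz).not_gt hfx
  have hxδ_lt : x ∈ ball x₀ δ := lt_of_le_of_ne hxδ fun hx => (hsphere x ⟨hxz, hx⟩).not_gt hfx
  exact hcontact x ⟨hxz, hxδ⟩ hfx.le (hmin.isLocalMin
    (inter_mem (closedBall_mem_nhds_of_mem hxz_lt) (closedBall_mem_nhds_of_mem hxδ_lt)))

lemma exists_mul_hopfBarrier_le [ProperSpace E] {f : E → ℝ} {x₀ : E} (hα : 0 ≤ α)
    (hcont : ∀ᶠ y in 𝓝 x₀, ContinuousAt f y) (hzero : 0 ≤ f x₀)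
    (hpos : ∀ y ∈ closedBall z ρ, y ≠ x₀ → 0 < f y)
    (hcontact : ∀ᶠ q : E × ℝ in 𝓝 x₀ ×ˢ 𝓝[>] 0, q.1 ∈ closedBall z ρ → 0 ≤ f q.1 →
      f q.1 ≤ q.2 * hopfBarrier z ρ α q.1 → ¬ IsLocalMin (f - q.2 • hopfBarrier z ρ α) q.1) :
    ∃ ε > 0, ∀ᶠ y in 𝓝[closedBall z ρ] x₀, ε * hopfBarrier z ρ α y ≤ f y := by
  obtain ⟨pa, hpa, pb, hpb, hno_contact⟩ := eventually_prod_iff.1 hcontact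
  obtain ⟨δ, hδ, hball⟩ := nhds_basis_closedBall.eventually_iff.1 (hcont.and hpa)
  have hnonneg : ∀ y ∈ closedBall z ρ, 0 ≤ f y := fun y hy => by
    rcases eq_or_ne y x₀ with rfl | hne
    exacts [hzero, (hpos y hy hne).le]
  obtain ⟨μ, hμ, hμ_le⟩ : ∃ μ : ℝ, 0 < μ ∧ ∀ y ∈ closedBall z ρ ∩ sphere x₀ δ, μ ≤ f y :=
    ((isCompact_closedBall z ρ).inter_right isClosed_sphere).exists_forall_le'
      (fun y hy => (hball (sphere_subset_closedBall hy.2)).1.continuousWithinAt)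
      fun y hy => hpos y hy.1 (ne_of_mem_sphere hy.2 hδ.ne')
  obtain ⟨ε, hε, hε_pb, hε_small⟩ :
      ∃ ε : ℝ, 0 < ε ∧ pb ε ∧ ε * (ρ ^ 2 + α * (ρ ^ 2) ^ 2) < μ := by
    have hsmall := (by fun_prop : ContinuousAt (fun ε => ε * (ρ ^ 2 + α * (ρ ^ 2) ^ 2))
      0).eventually_lt_const (u := μ) (by simpa using hμ)
    have hε_pos : ∀ᶠ ε : ℝ in 𝓝[>] 0, 0 < ε := eventually_mem_nhdsWithin
    exact (hε_pos.and (hpb.and (hsmall.filter_mono nhdsWithin_le_nhds))).exists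
  refine ⟨ε, hε, ?_⟩
  filter_upwards [eventually_mem_nhdsWithin,
    mem_nhdsWithin_of_mem_nhds (closedBall_mem_nhds x₀ hδ)] with y hyz hyδ
  refine mul_hopfBarrier_le_of_forall_not_isLocalMin (fun x hx => (hball hx).1) hnonneg ?_ ?_
    ⟨hyz, hyδ⟩
  · intro x hx
    exact (mul_le_mul_of_nonneg_left (hopfBarrier_le hα hx.1) hε.le).trans_lt
      (hε_small.trans_le (hμ_le x hx))
  · intro x hx
    exact hno_contact (hball hx.2).2 hε_pb hx.1 (hnonneg x hx.1)

lemma fderiv_apply_neg_of_mul_hopfBarrier_le {f : E → ℝ} {f' : E →L[ℝ] ℝ} {x₀ : E} {ε : ℝ}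
    (hρ : 0 < ρ) (hε : 0 < ε) (hx₀ : x₀ ∈ sphere z ρ) (hf : HasFDerivAt f f' x₀)
    (hzero : f x₀ = 0) (hle : ∀ᶠ y in 𝓝[closedBall z ρ] x₀, ε * hopfBarrier z ρ α y ≤ f y) :
    f' (x₀ - z) < 0 := by
  have hmin : IsLocalMinOn (f - ε • hopfBarrier z ρ α) (closedBall z ρ) x₀ := by
    filter_upwards [hle] with y hy
    simpa [hzero, hopfBarrier_of_mem_sphere hx₀] using hy
  have hcone : z - x₀ ∈ posTangentConeAt (closedBall z ρ) x₀ := by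
    refine mem_posTangentConeAt_of_segment_subset ?_
    rw [add_sub_cancel]
    exact (convex_closedBall z ρ).segment_subset (sphere_subset_closedBall hx₀)
      (mem_closedBall_self hρ.le)
  have hnonneg := hmin.hasFDerivWithinAt_nonneg
    (hf.sub ((hasFDerivAt_hopfBarrier z ρ α x₀).const_smul ε)).hasFDerivWithinAt hcone
  have hnorm := mem_sphere_iff_norm.1 hx₀
  rw [← neg_sub x₀ z, map_neg] at hnonneg
  simp only [sub_apply, smul_apply, innerSL_apply_apply, real_inner_self_eq_norm_sq, hnorm,
    sub_self, smul_eq_mul] at hnonneg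
  nlinarith [mul_pos hε (pow_pos hρ 2)]

end HopfBarrier

section HopfLemma

variable {n k : ℕ} {u w φ : EuclideanSpace ℝ (Fin n) → ℝ} {x z : EuclideanSpace ℝ (Fin n)}

lemma le_quadForm_conformalHessian_sub (hu : ContDiffAt ℝ 2 u x) (hw : ContDiffAt ℝ 2 w x)
    (hφ : ContDiffAt ℝ 2 φ x) (hmin : IsLocalMin (u - w - φ) x) (hw_nonneg : 0 ≤ w x)
    (a : EuclideanSpace ℝ (Fin n)) :
    (u x - w x) * fderiv ℝ (fderiv ℝ u) x a a + w x * fderiv ℝ (fderiv ℝ φ) x a a -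
        ‖fderiv ℝ u x‖ * ‖fderiv ℝ φ x‖ * ‖a‖ ^ 2 ≤
      a.ofLp ⬝ᵥ (conformalHessian u x - conformalHessian w x).mulVec a.ofLp := by
  have huw : ContDiffAt ℝ 2 (u - w) x := hu.sub hw
  have hgrad : fderiv ℝ w x = fderiv ℝ u x - fderiv ℝ φ x := by
    have hzero := hmin.fderiv_eq_zero
    rw [fderiv_sub (huw.differentiableAt two_ne_zero) (hφ.differentiableAt two_ne_zero),
      fderiv_sub (hu.differentiableAt two_ne_zero) (hw.differentiableAt two_ne_zero)] at hzero
    rw [← sub_eq_zero, ← neg_eq_zero, ← hzero]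
    abel
  have hhess := fderiv_fderiv_apply_self_nonneg_of_isLocalMin (u := u - w - φ)
    (huw.sub hφ) hmin a
  rw [fderiv_fderiv_sub huw hφ, fderiv_fderiv_sub hu hw, sub_apply, sub_apply, sub_apply,
    sub_apply] at hhess
  have hnorm : ‖fderiv ℝ u x‖ ^ 2 - 2 * (‖fderiv ℝ u x‖ * ‖fderiv ℝ φ x‖) ≤
      ‖fderiv ℝ w x‖ ^ 2 := by
    have habs := sq_le_sq' (neg_le.1 (norm_sub_rev (fderiv ℝ φ x) (fderiv ℝ u x) ▸
      (neg_sub ‖fderiv ℝ u x‖ _).symm ▸ norm_sub_norm_le (fderiv ℝ φ x) (fderiv ℝ u x)))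
      (norm_sub_norm_le (fderiv ℝ u x) (fderiv ℝ φ x))
    rw [hgrad]
    nlinarith [sq_nonneg ‖fderiv ℝ φ x‖]
  rw [Matrix.sub_mulVec, dotProduct_sub, dotProduct_conformalHessian_mulVec,
    dotProduct_conformalHessian_mulVec, real_inner_self_eq_norm_sq]
  nlinarith [mul_nonneg hw_nonneg hhess, mul_le_mul_of_nonneg_right hnorm (sq_nonneg ‖a‖)]

lemma le_quadForm_conformalHessian_sub_of_hopfBarrier {ρ α ε K G m U : ℝ}
    (hu : ContDiffAt ℝ 2 u x) (hw : ContDiffAt ℝ 2 w x)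
    (hmin : IsLocalMin (u - w - ε • hopfBarrier z ρ α) x) (hε : 0 ≤ ε)
    (hα : 0 ≤ α) (hx : x ∈ closedBall z ρ) (hαd : α * (ρ ^ 2 - ‖x - z‖ ^ 2) ≤ 1)
    (hwu : w x ≤ u x) (hle : u x - w x ≤ ε * hopfBarrier z ρ α x)
    (hK : ‖fderiv ℝ (fderiv ℝ u) x‖ ≤ K) (hG : ‖fderiv ℝ u x‖ ≤ G) (hm : 0 ≤ m) (hmw : m ≤ w x)
    (hwU : w x ≤ U) (a : EuclideanSpace ℝ (Fin n)) :
    ε * (8 * α * m * inner ℝ (x - z) a ^ 2 - (2 * ρ ^ 2 * K + 6 * U + 6 * ρ * G) * ‖a‖ ^ 2) ≤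
      a.ofLp ⬝ᵥ (conformalHessian u x - conformalHessian w x).mulVec a.ofLp := by
  have hquad := le_quadForm_conformalHessian_sub (φ := ε • hopfBarrier z ρ α) hu hw
    (contDiff_hopfBarrier.contDiffAt.const_smul ε) hmin (hm.trans hmw) a
  rw [fderiv_const_smul_field, Pi.smul_apply, norm_smul, Real.norm_of_nonneg hε,
    fderiv_const_smul (differentiableAt_fderiv_of_contDiffAt contDiff_hopfBarrier.contDiffAt),
    smul_apply, smul_apply, smul_eq_mul] at hquad
  have hhess_u : -(ε * (2 * ρ ^ 2) * (K * ‖a‖ ^ 2)) ≤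
      (u x - w x) * fderiv ℝ (fderiv ℝ u) x a a := by
    have hD : |fderiv ℝ (fderiv ℝ u) x a a| ≤ K * ‖a‖ ^ 2 :=
      calc |fderiv ℝ (fderiv ℝ u) x a a| ≤ ‖fderiv ℝ (fderiv ℝ u) x‖ * ‖a‖ * ‖a‖ :=
            (fderiv ℝ (fderiv ℝ u) x).le_opNorm₂ a a
        _ ≤ K * ‖a‖ ^ 2 := by rw [mul_assoc, ← sq]; gcongr
    have hgap : u x - w x ≤ ε * (2 * ρ ^ 2) :=
      hle.trans (mul_le_mul_of_nonneg_left (hopfBarrier_le_two_mul_sq hx hαd) hε)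
    refine neg_le_of_abs_le ?_
    rw [abs_mul, abs_of_nonneg (sub_nonneg.2 hwu)]
    exact mul_le_mul hgap hD (abs_nonneg _) (by positivity)
  have hhess_barrier : ε * (m * (8 * α * inner ℝ (x - z) a ^ 2) - U * (6 * ‖a‖ ^ 2)) ≤
      w x * (ε * fderiv ℝ (fderiv ℝ (hopfBarrier z ρ α)) x a a) := by
    rw [mul_left_comm (w x)]
    refine mul_le_mul_of_nonneg_left ?_ hε
    refine le_trans ?_ (mul_le_mul_of_nonneg_left (le_fderiv_fderiv_hopfBarrier hαd a)
      (hm.trans hmw))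
    rw [mul_sub]
    gcongr
  have hgrad : ‖fderiv ℝ u x‖ * (ε * ‖fderiv ℝ (hopfBarrier z ρ α) x‖) * ‖a‖ ^ 2 ≤
      G * (ε * (6 * ρ)) * ‖a‖ ^ 2 := by
    gcongr
    · exact (norm_nonneg _).trans hG
    · exact norm_fderiv_hopfBarrier_le hα hx hαd
  linarith

lemma posSemidef_of_forall_le_quadForm {M N : Matrix (Fin n) (Fin n) ℝ} (hM : M.IsHermitian)
    (hN : N.IsHermitian) (e : EuclideanSpace ℝ (Fin n)) {s C : ℝ}
    (hle : ∀ a : EuclideanSpace ℝ (Fin n),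
      s * inner ℝ e a ^ 2 - C * ‖a‖ ^ 2 ≤ a.ofLp ⬝ᵥ (M - N).mulVec a.ofLp) :
    (M + (C • 1 - s • Matrix.vecMulVec e.ofLp e.ofLp) - N).PosSemidef := by
  refine .of_dotProduct_mulVec_nonneg ((hM.add ?_).sub hN) fun a => ?_
  · exact (Matrix.isHermitian_one.smul (.all C)).sub
      ((isHermitian_vecMulVec_self _).smul (.all s))
  have hinner : inner ℝ e (WithLp.toLp 2 a) = e.ofLp ⬝ᵥ a := by
    simp [PiLp.inner_apply, dotProduct, mul_comm]
  have hnorm : ‖WithLp.toLp 2 a‖ ^ 2 = a ⬝ᵥ a := by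
    rw [EuclideanSpace.norm_sq_eq]
    simp [dotProduct, sq]
  have hquad := hle (WithLp.toLp 2 a)
  rw [hinner, hnorm, Matrix.sub_mulVec, dotProduct_sub] at hquad
  simp only [star_trivial, Matrix.sub_mulVec, Matrix.add_mulVec, Matrix.smul_mulVec,
    Matrix.one_mulVec, Matrix.vecMulVec_mulVec, dotProduct_sub, dotProduct_add, dotProduct_smul,
    smul_eq_mul, op_smul_eq_smul, dotProduct_comm a e.ofLp]
  linarith

/- A local minimum would give `B(w) ≤ B(u) + 8αmε (θ I - e ⊗ e)`, which contradicts the equation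
because `σ_k` is monotone at `B(w)` and decreases from `B(u)` in the direction `θ I - e ⊗ e`. -/
lemma not_isLocalMin_sub_hopfBarrier {ρ α ε K G m U θ : ℝ} (hu : ContDiffAt ℝ 2 u x)
    (hw : ContDiffAt ℝ 2 w x) (hε : 0 ≤ ε) (hα : 0 ≤ α) (hx : x ∈ closedBall z ρ)
    (hαd : α * (ρ ^ 2 - ‖x - z‖ ^ 2) ≤ 1) (hwu : w x ≤ u x)
    (hle : u x - w x ≤ ε * hopfBarrier z ρ α x) (hK : ‖fderiv ℝ (fderiv ℝ u) x‖ ≤ K)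
    (hG : ‖fderiv ℝ u x‖ ≤ G) (hm : 0 ≤ m) (hmw : m ≤ w x) (hwU : w x ≤ U)
    (hθ : 8 * α * m * θ = 2 * ρ ^ 2 * K + 6 * U + 6 * ρ * G)
    (hsigma : sigmaK k (conformalHessian w x) = sigmaK k (conformalHessian u x))
    (hmono : SigmaKMonotoneAt k (conformalHessian w x))
    (hlt : sigmaK k (conformalHessian u x + (8 * α * m * ε) •
        (θ • 1 - Matrix.vecMulVec (x - z).ofLp (x - z).ofLp)) < sigmaK k (conformalHessian u x)) :
    ¬ IsLocalMin (u - w - ε • hopfBarrier z ρ α) x := by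
  intro hmin
  have hquad := le_quadForm_conformalHessian_sub_of_hopfBarrier hu hw hmin hε hα hx hαd hwu hle hK
    hG hm hmw hwU
  have hpsd := posSemidef_of_forall_le_quadForm (isHermitian_conformalHessian hu)
    (isHermitian_conformalHessian hw) (x - z) (s := 8 * α * m * ε) (C := 8 * α * m * ε * θ)
    fun a => (hquad a).trans' (by rw [← hθ]; linarith)
  have hstep := hmono _ hpsd
  rw [add_sub_cancel, mul_smul, ← smul_sub, hsigma] at hstep
  exact hstep.not_gt hlt

lemma exists_eventually_sigmaK_conformalHessian_add_smul_lt {x₀ : EuclideanSpace ℝ (Fin n)}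
    (hk : 1 ≤ k) (hkn : k ≤ n) (hx₀ : x₀ ≠ z) (hu : ContDiffAt ℝ 2 u x₀)
    (hcone : gammaKPlus k (conformalHessian u x₀)) :
    ∃ θ : ℝ, 0 < θ ∧ ∀ᶠ q : EuclideanSpace ℝ (Fin n) × ℝ in 𝓝 (x₀, 0), 0 < q.2 →
      sigmaK k (conformalHessian u q.1 +
          q.2 • (θ • 1 - Matrix.vecMulVec (q.1 - z).ofLp (q.1 - z).ofLp)) <
        sigmaK k (conformalHessian u q.1) := by
  have hnormal : (x₀ - z).ofLp ≠ 0 := fun h => hx₀ (sub_eq_zero.1 (WithLp.ofLp_injective 2 h))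
  obtain ⟨θ, hθ, hellip⟩ := exists_eventually_sigmaK_add_smul_lt hk hkn
    (isHermitian_conformalHessian hu) hcone hnormal
  have hcont : ContinuousAt (fun q : EuclideanSpace ℝ (Fin n) × ℝ =>
      (conformalHessian u q.1, (q.1 - z).ofLp, q.2)) (x₀, 0) :=
    (ContinuousAt.comp (g := conformalHessian u) (f := Prod.fst) (continuousAt_conformalHessian hu)
      continuousAt_fst).prodMk (by fun_prop)
  exact ⟨θ, hθ, hcont.tendsto.eventually hellip⟩

lemma exists_eventually_not_isLocalMin_sub_hopfBarrier {ρ : ℝ} {x₀ : EuclideanSpace ℝ (Fin n)}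
    (hk : 1 ≤ k) (hkn : k ≤ n) (hρ : 0 < ρ) (hx₀ : x₀ ∈ sphere z ρ)
    (hu : ContDiffAt ℝ 2 u x₀) (hw : ContDiffAt ℝ 2 w x₀) (hpos : 0 < u x₀) (heq : w x₀ = u x₀)
    (hcone : gammaKPlus k (conformalHessian u x₀))
    (hsigma : ∀ᶠ y in 𝓝 x₀, sigmaK k (conformalHessian w y) = sigmaK k (conformalHessian u y))
    (hmono : ∀ᶠ y in 𝓝 x₀, SigmaKMonotoneAt k (conformalHessian w y)) :
    ∃ α : ℝ, 0 ≤ α ∧ ∀ᶠ q : EuclideanSpace ℝ (Fin n) × ℝ in 𝓝 x₀ ×ˢ 𝓝[>] 0,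
      q.1 ∈ closedBall z ρ → 0 ≤ (u - w) q.1 → (u - w) q.1 ≤ q.2 * hopfBarrier z ρ α q.1 →
        ¬ IsLocalMin (u - w - q.2 • hopfBarrier z ρ α) q.1 := by
  obtain ⟨θ, hθ, hellip⟩ := exists_eventually_sigmaK_conformalHessian_add_smul_lt hk hkn
    (ne_of_mem_sphere hx₀ hρ.ne') hu hcone
  set K := ‖fderiv ℝ (fderiv ℝ u) x₀‖ + 1
  set G := ‖fderiv ℝ u x₀‖ + 1
  have hαθ : ∃ α > 0, 8 * α * (u x₀ / 2) * θ = 2 * ρ ^ 2 * K + 6 * (2 * u x₀) + 6 * ρ * G :=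
    ⟨(2 * ρ ^ 2 * K + 6 * (2 * u x₀) + 6 * ρ * G) / (8 * (u x₀ / 2) * θ), by positivity,
      by field_simp⟩
  obtain ⟨α, hα, hαθ⟩ := hαθ
  have hscale : Tendsto (fun q : EuclideanSpace ℝ (Fin n) × ℝ => (q.1, 8 * α * (u x₀ / 2) * q.2))
      (𝓝 (x₀, 0)) (𝓝 (x₀, 0)) :=
    (by fun_prop : Continuous _).tendsto' _ _ (by simp)
  have hellip' := (hscale.eventually hellip).filter_mono
    (nhds_prod_eq.ge.trans' (prod_mono_right _ (nhdsWithin_le_nhds (s := Ioi 0))))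
  have hwx : ContinuousAt w x₀ := hw.continuousAt
  have hgrad := (differentiableAt_fderiv_of_contDiffAt hu).continuousAt
  have hhess_lt : ∀ᶠ y in 𝓝 x₀, ‖fderiv ℝ (fderiv ℝ u) y‖ < K :=
    (@continuous_norm (EuclideanSpace ℝ (Fin n) →L[ℝ] EuclideanSpace ℝ (Fin n) →L[ℝ] ℝ)
      _).continuousAt.comp (continuousAt_fderiv_fderiv hu) |>.eventually_lt_const (lt_add_one _)
  have hα_lt := (by fun_prop : ContinuousAt (fun y => α * (ρ ^ 2 - ‖y - z‖ ^ 2))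
    x₀).eventually_lt_const (u := 1) (by simp [mem_sphere_iff_norm.1 hx₀])
  have hε_pos : ∀ᶠ ε : ℝ in 𝓝[>] 0, 0 < ε := eventually_mem_nhdsWithin
  refine ⟨α, hα.le, ?_⟩
  filter_upwards [hellip', hε_pos.prod_inr _, (hu.eventually (by simp)).prod_inl _,
    (hw.eventually (by simp)).prod_inl _, hα_lt.prod_inl _,
    hhess_lt.prod_inl _, (hgrad.norm.eventually_lt_const (lt_add_one _)).prod_inl _,
    (hwx.eventually_const_lt (u := u x₀ / 2) (by linarith)).prod_inl _,
    (hwx.eventually_lt_const (u := 2 * u x₀) (by linarith)).prod_inl _, hsigma.prod_inl _,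
    hmono.prod_inl _] with q hlt hε huq hwq hαq hK hG hm hU hσ hmon hz hwu hle
  exact not_isLocalMin_sub_hopfBarrier huq hwq hε.le hα.le hz hαq.le (sub_nonneg.1 hwu) hle hK.le
    hG.le (half_pos hpos).le hm.le hU.le hαθ hσ hmon (hlt (by positivity))

theorem fderiv_apply_lt_of_lt_on_closedBall {ρ : ℝ} {x₀ : EuclideanSpace ℝ (Fin n)}
    (hk : 1 ≤ k) (hkn : k ≤ n) (hρ : 0 < ρ) (hx₀ : x₀ ∈ sphere z ρ)
    (hu : ContDiffAt ℝ 2 u x₀) (hw : ContDiffAt ℝ 2 w x₀) (hpos : 0 < u x₀) (heq : w x₀ = u x₀)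
    (hcone : gammaKPlus k (conformalHessian u x₀))
    (hsigma : ∀ᶠ y in 𝓝 x₀, sigmaK k (conformalHessian w y) = sigmaK k (conformalHessian u y))
    (hmono : ∀ᶠ y in 𝓝 x₀, SigmaKMonotoneAt k (conformalHessian w y))
    (hlt : ∀ y ∈ closedBall z ρ, y ≠ x₀ → w y < u y) :
    fderiv ℝ u x₀ (x₀ - z) < fderiv ℝ w x₀ (x₀ - z) := by
  obtain ⟨α, hα, hcontact⟩ := exists_eventually_not_isLocalMin_sub_hopfBarrier hk hkn hρ hx₀ hu hw
    hpos heq hcone hsigma hmono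
  have huw : ContDiffAt ℝ 2 (u - w) x₀ := hu.sub hw
  have hzero : (u - w) x₀ = 0 := sub_eq_zero.2 heq.symm
  obtain ⟨ε, hε, hle⟩ := exists_mul_hopfBarrier_le hα
    ((huw.eventually (by simp)).mono fun y hy => hy.continuousAt) hzero.ge
    (fun y hy hne => sub_pos.2 (hlt y hy hne)) hcontact
  have hderiv := fderiv_apply_neg_of_mul_hopfBarrier_le hρ hε hx₀
    ((hu.differentiableAt two_ne_zero).hasFDerivAt.sub
      (hw.differentiableAt two_ne_zero).hasFDerivAt) hzero hle
  exact sub_neg.1 hderiv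

lemma mem_ball_of_mem_closedBall_midpoint {E : Type*} [NormedAddCommGroup E]
    [InnerProductSpace ℝ E] {c x₀ y : E} {r : ℝ} (hx₀ : x₀ ∈ sphere c r)
    (hy : y ∈ closedBall (midpoint ℝ c x₀) (r / 2)) (hne : y ≠ x₀) : y ∈ ball c r := by
  have hmid : y - midpoint ℝ c x₀ = (y - c) - (2⁻¹ : ℝ) • (x₀ - c) := by
    rw [midpoint_eq_smul_add, invOf_eq_inv]
    module
  have hpos : 0 < ‖(y - c) - (x₀ - c)‖ ^ 2 := by
    rw [sub_sub_sub_cancel_right]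
    exact pow_pos (norm_pos_iff.2 (sub_ne_zero.2 hne)) 2
  have hle := pow_le_pow_left₀ (norm_nonneg _) (mem_closedBall_iff_norm.1 hy) 2
  rw [hmid, norm_sub_sq_real, real_inner_smul_right, norm_smul] at hle
  rw [norm_sub_sq_real] at hpos
  rw [mem_sphere_iff_norm.1 hx₀] at hle hpos
  norm_num at hle
  refine mem_ball_iff_norm.2 (lt_of_pow_lt_pow_left₀ 2 ?_ (by nlinarith))
  exact mem_sphere_iff_norm.1 hx₀ ▸ norm_nonneg _

theorem fderiv_apply_lt_of_lt_on_ball {c x₀ : EuclideanSpace ℝ (Fin n)} {r : ℝ}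
    (hk : 1 ≤ k) (hkn : k ≤ n) (hr : 0 < r) (hx₀ : x₀ ∈ sphere c r)
    (hu : ContDiffAt ℝ 2 u x₀) (hw : ContDiffAt ℝ 2 w x₀) (hpos : 0 < u x₀) (heq : w x₀ = u x₀)
    (hcone : gammaKPlus k (conformalHessian u x₀))
    (hsigma : ∀ᶠ y in 𝓝 x₀, sigmaK k (conformalHessian w y) = sigmaK k (conformalHessian u y))
    (hmono : ∀ᶠ y in 𝓝 x₀, SigmaKMonotoneAt k (conformalHessian w y))
    (hlt : ∀ y ∈ ball c r, w y < u y) :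
    fderiv ℝ u x₀ (x₀ - c) < fderiv ℝ w x₀ (x₀ - c) := by
  have hmid : x₀ - midpoint ℝ c x₀ = (2⁻¹ : ℝ) • (x₀ - c) := by
    rw [← vsub_eq_sub, right_vsub_midpoint]; simp
  have hx₀_mid : x₀ ∈ sphere (midpoint ℝ c x₀) (r / 2) := by
    rw [mem_sphere, dist_right_midpoint, dist_comm, mem_sphere.1 hx₀, Real.norm_two,
      inv_mul_eq_div]
  have hlt_mid := fderiv_apply_lt_of_lt_on_closedBall hk hkn (half_pos hr) hx₀_mid hu hw hpos heq
    hcone hsigma hmono fun y hy hne => hlt y (mem_ball_of_mem_closedBall_midpoint hx₀ hy hne)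
  simpa [hmid] using hlt_mid

end HopfLemma

section KelvinTransform

open EuclideanGeometry (inversion hasFDerivAt_inversion)

variable {F : Type*} [NormedAddCommGroup F] [InnerProductSpace ℝ F]

lemma reflection_orthogonal_singleton_apply (d a : F) :
    (ℝ ∙ d)ᗮ.reflection a = a - (2 * (inner ℝ d a / ‖d‖ ^ 2)) • d := by
  rw [Submodule.reflection_orthogonal_apply, Submodule.reflection_singleton_apply, neg_sub,
    RCLike.ofReal_real_eq_id, id, ← Nat.cast_smul_eq_nsmul ℝ, smul_smul, Nat.cast_ofNat]

/-- The Kelvin transform of `u` with respect to the sphere of centre `c` and radius `r`, normalised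
so that for `u = v ^ (-2 / (n - 2))` it corresponds to the usual Kelvin transform of `v`. Its value
at `c` is always `0`. -/
noncomputable def kelvinTransform (c : F) (r : ℝ) (u : F → ℝ) (x : F) : ℝ :=
  (dist x c / r) ^ 2 * u (inversion c r x)

variable {c x : F} {r : ℝ} {u : F → ℝ}

@[simp]
lemma kelvinTransform_center (c : F) (r : ℝ) (u : F → ℝ) : kelvinTransform c r u c = 0 := by
  simp [kelvinTransform]

lemma kelvinTransform_of_mem_sphere (hr : r ≠ 0) (hx : x ∈ sphere c r) :
    kelvinTransform c r u x = u x := by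
  rw [kelvinTransform, EuclideanGeometry.inversion_of_mem_sphere hx, mem_sphere.1 hx,
    div_self hr, one_pow, one_mul]

lemma contDiffAt_inversion (hx : x ≠ c) : ContDiffAt ℝ 2 (inversion c r) x :=
  contDiffAt_const.inversion contDiffAt_const contDiffAt_id hx

lemma contDiffAt_kelvinTransform (hx : x ≠ c) (hu : ContDiffAt ℝ 2 u (inversion c r x)) :
    ContDiffAt ℝ 2 (kelvinTransform c r u) x :=
  (((contDiffAt_id.dist ℝ contDiffAt_const hx).div_const r).pow 2).mul
    (hu.comp x (contDiffAt_inversion hx))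

lemma fderiv_kelvinTransform_apply (hr : r ≠ 0) (hx : x ≠ c)
    (hu : DifferentiableAt ℝ u (inversion c r x)) (a : F) :
    fderiv ℝ (kelvinTransform c r u) x a = 2 / r ^ 2 * u (inversion c r x) * inner ℝ (x - c) a +
      fderiv ℝ u (inversion c r x) ((ℝ ∙ (x - c))ᗮ.reflection a) := by
  have hfactor : HasFDerivAt (fun y => ‖y - c‖ ^ 2 * (r ^ 2)⁻¹) _ x :=
    ((hasFDerivAt_id x).sub_const c).norm_sq.mul_const _
  have hmul := hfactor.mul (hu.hasFDerivAt.comp x (hasFDerivAt_inversion hx))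
  have hkelvin : kelvinTransform c r u =
      (fun y => ‖y - c‖ ^ 2 * (r ^ 2)⁻¹) * (u ∘ inversion c r) := by
    funext y
    simp [kelvinTransform, dist_eq_norm, div_eq_mul_inv, mul_pow]
  have hnorm : ‖x - c‖ ≠ 0 := norm_ne_zero_iff.2 (sub_ne_zero.2 hx)
  rw [hkelvin, hmul.fderiv]
  simp only [dist_eq_norm, ContinuousLinearMap.comp_smulₛₗ, Real.ringHom_apply,
    Function.comp_apply, id_eq, map_sub, ContinuousLinearMap.comp_id, add_apply, smul_apply,
    ContinuousLinearMap.comp_apply, ContinuousLinearEquiv.coe_coe,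
    LinearIsometryEquiv.coe_toContinuousLinearEquiv, smul_eq_mul, sub_apply, coe_innerSL_apply,
    nsmul_eq_mul, Nat.cast_ofNat, inner_sub_left]
  field_simp
  ring

lemma fderiv_kelvinTransform_apply_of_mem_sphere (hr : r ≠ 0) (hx : x ∈ sphere c r)
    (hu : DifferentiableAt ℝ u x) :
    fderiv ℝ (kelvinTransform c r u) x (x - c) = 2 * u x - fderiv ℝ u x (x - c) := by
  have hinv : inversion c r x = x := EuclideanGeometry.inversion_of_mem_sphere hx
  rw [fderiv_kelvinTransform_apply hr (ne_of_mem_sphere hx hr) (by rwa [hinv]), hinv,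
    Submodule.reflection_orthogonalComplement_singleton_eq_neg, map_neg, real_inner_self_eq_norm_sq,
    mem_sphere_iff_norm.1 hx]
  field_simp
  ring

lemma fderiv_fderiv_kelvinTransform_apply (hr : r ≠ 0) (hx : x ≠ c)
    (hu : ContDiffAt ℝ 2 u (inversion c r x)) (a b : F) :
    fderiv ℝ (fderiv ℝ (kelvinTransform c r u)) x a b =
      (r / dist x c) ^ 2 * fderiv ℝ (fderiv ℝ u) (inversion c r x)
        ((ℝ ∙ (x - c))ᗮ.reflection a) ((ℝ ∙ (x - c))ᗮ.reflection b) +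
      inner ℝ a b * (2 / r ^ 2 * u (inversion c r x) -
        2 / dist x c ^ 2 * fderiv ℝ u (inversion c r x) (x - c)) := by
  have hnorm : ‖x - c‖ ≠ 0 := norm_ne_zero_iff.2 (sub_ne_zero.2 hx)
  have hgrad : (fun y => fderiv ℝ (kelvinTransform c r u) y b) =ᶠ[𝓝 x] fun y =>
      2 / r ^ 2 * u (inversion c r y) * inner ℝ (y - c) b + fderiv ℝ u (inversion c r y)
        (b - (2 * (inner ℝ (y - c) b * (‖y - c‖ ^ 2)⁻¹)) • (y - c)) := by
    filter_upwards [(contDiffAt_inversion hx).continuousAt.eventually (hu.eventually (by simp)),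
      isOpen_ne.mem_nhds hx] with y huy hy
    rw [fderiv_kelvinTransform_apply hr hy (huy.differentiableAt two_ne_zero),
      reflection_orthogonal_singleton_apply, div_eq_mul_inv (inner ℝ (y - c) b)]
  have hsub := (hasFDerivAt_id (𝕜 := ℝ) x).sub_const c
  have hinner : HasFDerivAt (fun y => inner ℝ (y - c) b) _ x :=
    hsub.inner ℝ (hasFDerivAt_const b x)
  have hinv := hasFDerivAt_inversion (R := r) hx
  have hnorm_inv := (hasDerivAt_inv (pow_ne_zero 2 hnorm)).comp_hasFDerivAt x hsub.norm_sq
  have hreflection := (((hinner.mul hnorm_inv).const_mul 2).smul hsub).const_sub b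
  have hvalue := ((hu.differentiableAt two_ne_zero).hasFDerivAt.comp x hinv).const_mul (2 / r ^ 2)
  have hfderiv := (differentiableAt_fderiv_of_contDiffAt hu).hasFDerivAt.comp x hinv
  have hderiv : HasFDerivAt (fun y => 2 / r ^ 2 * u (inversion c r y) * inner ℝ (y - c) b +
      fderiv ℝ u (inversion c r y) (b - (2 * (inner ℝ (y - c) b * (‖y - c‖ ^ 2)⁻¹)) • (y - c)))
      _ x := (hvalue.mul hinner).add (hfderiv.clm_apply hreflection)
  have hhess := hasFDerivAt_fderiv_apply (contDiffAt_kelvinTransform hx hu) b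
  rw [← ContinuousLinearMap.flip_apply, ← hhess.fderiv, hgrad.fderiv_eq, hderiv.fderiv]
  simp only [Function.comp_apply, id_eq, inner_sub_left, dist_eq_norm,
    ContinuousLinearMap.comp_smulₛₗ, Real.ringHom_apply, Pi.mul_apply, map_sub,
    ContinuousLinearMap.comp_id, neg_smul, smul_neg, smul_add, neg_add_rev,
    ContinuousLinearMap.comp_add, ContinuousLinearMap.comp_neg, ContinuousLinearMap.flip_smul,
    smul_apply, map_smul, add_apply, ContinuousLinearMap.comp_apply,
    ContinuousLinearMap.prod_apply, ContinuousLinearMap.id_apply, zero_apply, fderivInnerCLM_apply,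
    inner_zero_right, zero_add, smul_eq_mul, ContinuousLinearEquiv.coe_coe,
    LinearIsometryEquiv.coe_toContinuousLinearEquiv, reflection_orthogonal_singleton_apply,
    neg_apply, ContinuousLinearMap.smulRight_apply, sub_apply, coe_innerSL_apply, nsmul_eq_mul,
    Nat.cast_ofNat, ContinuousLinearMap.flip_apply]
  field_simp
  ring

lemma norm_fderiv_kelvinTransform_sq [CompleteSpace F] (hr : r ≠ 0) (hx : x ≠ c)
    (hu : DifferentiableAt ℝ u (inversion c r x)) :
    ‖fderiv ℝ (kelvinTransform c r u) x‖ ^ 2 =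
      4 * u (inversion c r x) ^ 2 * dist x c ^ 2 / r ^ 4 -
        4 * u (inversion c r x) / r ^ 2 * fderiv ℝ u (inversion c r x) (x - c) +
        ‖fderiv ℝ u (inversion c r x)‖ ^ 2 := by
  have hnorm (w : F → ℝ) (y : F) : ‖fderiv ℝ w y‖ = ‖gradient w y‖ := by simp [gradient]
  have hinner (w : F → ℝ) (y a : F) : fderiv ℝ w y a = inner ℝ (gradient w y) a := by
    simp [gradient]
  have hgrad : gradient (kelvinTransform c r u) x = (2 / r ^ 2 * u (inversion c r x)) • (x - c) +
      (ℝ ∙ (x - c))ᗮ.reflection (gradient u (inversion c r x)) := by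
    refine ext_inner_right ℝ fun a => ?_
    rw [← hinner, fderiv_kelvinTransform_apply hr hx hu, inner_add_left, real_inner_smul_left,
      hinner, LinearIsometryEquiv.inner_map_eq_flip, Submodule.reflection_symm]
  rw [hnorm, hnorm, hgrad, norm_add_sq_real, LinearIsometryEquiv.norm_map, real_inner_smul_left,
    real_inner_comm, LinearIsometryEquiv.inner_map_eq_flip, Submodule.reflection_symm,
    Submodule.reflection_orthogonalComplement_singleton_eq_neg,
    inner_neg_right, ← hinner, norm_smul, mul_pow, Real.norm_eq_abs, sq_abs,
    dist_eq_norm]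
  field_simp
  ring

lemma kelvinTransform_eq_sq_mul (hr : r ≠ 0) (y : F) :
    kelvinTransform c r u y = r ^ 2 * kelvinTransform c 1 u (AffineMap.lineMap c y (r ^ 2)⁻¹) := by
  rcases eq_or_ne y c with rfl | hy
  · simp
  have hdist : dist y c ≠ 0 := dist_ne_zero.2 hy
  have hinv : inversion c 1 (AffineMap.lineMap c y (r ^ 2)⁻¹) = inversion c r y := by
    simp only [inversion, dist_lineMap_left, AffineMap.lineMap_vsub_left, smul_smul]
    congr 2
    simp only [norm_inv, norm_pow, Real.norm_eq_abs, sq_abs, dist_comm c y, one_div, mul_inv_rev,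
      inv_inv]
    field_simp
  rw [kelvinTransform, kelvinTransform, hinv, dist_lineMap_left]
  simp only [norm_inv, norm_pow, Real.norm_eq_abs, sq_abs, dist_comm c y, div_one]
  field_simp

lemma continuousAt_kelvinTransform_uncurry (hkelvin : Continuous (kelvinTransform c 1 u))
    (hr : r ≠ 0) (y : F) :
    ContinuousAt (fun q : ℝ × F => kelvinTransform c q.1 u q.2) (r, y) := by
  have hrescale : ContinuousAt (fun q : ℝ × F => q.1 ^ 2 *
      kelvinTransform c 1 u (AffineMap.lineMap c q.2 (q.1 ^ 2)⁻¹)) (r, y) := by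
    have : r ^ 2 ≠ 0 := pow_ne_zero 2 hr
    simp only [AffineMap.lineMap_apply]
    fun_prop (disch := assumption)
  refine hrescale.congr ?_
  filter_upwards [continuousAt_fst.eventually_ne hr] with q hq
  exact (kelvinTransform_eq_sq_mul hq q.2).symm

lemma continuous_kelvinTransform (hkelvin : Continuous (kelvinTransform c 1 u)) (hr : r ≠ 0) :
    Continuous (kelvinTransform c r u) :=
  continuous_iff_continuousAt.2 fun y =>
    (continuousAt_kelvinTransform_uncurry hkelvin hr y).comp (f := fun y => (r, y)) (by fun_prop)

end KelvinTransform

section ConformalCovariance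

open EuclideanGeometry (inversion)

variable {n k : ℕ} {c x : EuclideanSpace ℝ (Fin n)} {r : ℝ} {u : EuclideanSpace ℝ (Fin n) → ℝ}

lemma exists_mem_orthogonalGroup_mulVec_eq
    (L : EuclideanSpace ℝ (Fin n) ≃ₗᵢ[ℝ] EuclideanSpace ℝ (Fin n)) :
    ∃ Q ∈ Matrix.orthogonalGroup (Fin n) ℝ, ∀ a, (L a).ofLp = Q.mulVec a.ofLp := by
  have hmulVec (a : EuclideanSpace ℝ (Fin n)) : (L a).ofLp =
      (Matrix.toEuclideanLin.symm L.toLinearMap).mulVec a.ofLp := by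
    rw [← Matrix.toLin'_apply, ← Matrix.ofLp_toLpLin, LinearEquiv.apply_symm_apply]
    rfl
  refine ⟨_, (Matrix.mem_orthogonalGroup_iff' _ _).2 ?_, hmulVec⟩
  refine Matrix.mulVec_injective (funext fun b => dotProduct_eq _ _ fun a => ?_)
  have hinner := L.inner_map_map (.toLp 2 a) (.toLp 2 b)
  rw [EuclideanSpace.inner_eq_star_dotProduct, EuclideanSpace.inner_eq_star_dotProduct,
    hmulVec, hmulVec, star_trivial, star_trivial] at hinner
  rw [← Matrix.mulVec_mulVec, dotProduct_comm, Matrix.dotProduct_mulVec, Matrix.vecMul_transpose,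
    Matrix.one_mulVec, dotProduct_comm, hinner]

lemma conformalHessian_kelvinTransform_eq_conj (hr : r ≠ 0) (hx : x ≠ c)
    (hu : ContDiffAt ℝ 2 u (inversion c r x)) :
    ∃ Q ∈ Matrix.orthogonalGroup (Fin n) ℝ, conformalHessian (kelvinTransform c r u) x =
      Q.transpose * conformalHessian u (inversion c r x) * Q := by
  obtain ⟨Q, hQ, hmulVec⟩ := exists_mem_orthogonalGroup_mulVec_eq (ℝ ∙ (x - c))ᗮ.reflection
  refine ⟨Q, hQ, Matrix.mulVec_injective (funext fun b => dotProduct_eq _ _ fun a => ?_)⟩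
  have hdist : dist x c ≠ 0 := dist_ne_zero.2 hx
  have hkelvin := dotProduct_conformalHessian_mulVec (kelvinTransform c r u) x (.toLp 2 a)
    (.toLp 2 b)
  have hu' := dotProduct_conformalHessian_mulVec u (inversion c r x)
    ((ℝ ∙ (x - c))ᗮ.reflection (.toLp 2 a)) ((ℝ ∙ (x - c))ᗮ.reflection (.toLp 2 b))
  rw [LinearIsometryEquiv.inner_map_map, hmulVec, hmulVec] at hu'
  rw [dotProduct_comm, dotProduct_comm _ a, ← Matrix.mulVec_mulVec, ← Matrix.mulVec_mulVec,
    Matrix.dotProduct_mulVec a Q.transpose, Matrix.vecMul_transpose, hkelvin, hu',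
    fderiv_fderiv_kelvinTransform_apply hr hx hu,
    norm_fderiv_kelvinTransform_sq hr hx (hu.differentiableAt two_ne_zero), kelvinTransform]
  field_simp
  ring

lemma sigmaK_conformalHessian_kelvinTransform (hr : r ≠ 0) (hx : x ≠ c)
    (hu : ContDiffAt ℝ 2 u (inversion c r x)) (j : ℕ) :
    sigmaK j (conformalHessian (kelvinTransform c r u) x) =
      sigmaK j (conformalHessian u (inversion c r x)) := by
  obtain ⟨Q, hQ, hconj⟩ := conformalHessian_kelvinTransform_eq_conj hr hx hu
  rw [hconj, sigmaK_conj ((Matrix.mem_orthogonalGroup_iff _ _).1 hQ)]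

lemma gammaKPlus_conformalHessian_kelvinTransform (hr : r ≠ 0) (hx : x ≠ c)
    (hu : ContDiffAt ℝ 2 u (inversion c r x))
    (hcone : gammaKPlus k (conformalHessian u (inversion c r x))) :
    gammaKPlus k (conformalHessian (kelvinTransform c r u) x) := fun j hj hjk =>
  (sigmaK_conformalHessian_kelvinTransform hr hx hu j).symm ▸ hcone j hj hjk

lemma sigmaKMonotoneAt_conj {Q M : Matrix (Fin n) (Fin n) ℝ}
    (hQ : Q ∈ Matrix.orthogonalGroup (Fin n) ℝ) (hM : SigmaKMonotoneAt k M) :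
    SigmaKMonotoneAt k (Q.transpose * M * Q) := by
  have hQQ : Q * Q.transpose = 1 := (Matrix.mem_orthogonalGroup_iff _ _).1 hQ
  have hQQ' : Q.transpose * Q = 1 := (Matrix.mem_orthogonalGroup_iff' _ _).1 hQ
  intro N hN
  have hadd : Q.transpose * M * Q + N =
      Q.transpose * (M + Q * N * Q.transpose) * Q := by
    rw [mul_add, add_mul, ← mul_assoc, ← mul_assoc, hQQ', one_mul, mul_assoc N, hQQ', mul_one]
  rw [hadd, sigmaK_conj hQQ, sigmaK_conj hQQ]
  exact hM _ (hN.mul_mul_conjTranspose_same Q)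

lemma sigmaKMonotoneAt_conformalHessian_kelvinTransform (hr : r ≠ 0) (hx : x ≠ c)
    (hu : ContDiffAt ℝ 2 u (inversion c r x))
    (hmono : SigmaKMonotoneAt k (conformalHessian u (inversion c r x))) :
    SigmaKMonotoneAt k (conformalHessian (kelvinTransform c r u) x) := by
  obtain ⟨Q, hQ, hconj⟩ := conformalHessian_kelvinTransform_eq_conj hr hx hu
  exact hconj ▸ sigmaKMonotoneAt_conj hQ hmono

end ConformalCovariance

section RadialComparison

open EuclideanGeometry (inversion dist_inversion_center inversion_of_mem_sphere)

lemma apply_lineMap_le_mul {E : Type*} [NormedAddCommGroup E] [NormedSpace ℝ E] {u : E → ℝ}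
    {c y : E} {t : ℝ} (ht : 1 ≤ t)
    (hu : ∀ s ∈ Icc 1 t, DifferentiableAt ℝ u (AffineMap.lineMap c y s))
    (hradial : ∀ s ∈ Icc 1 t, fderiv ℝ u (AffineMap.lineMap c y s) (AffineMap.lineMap c y s - c) ≤
      u (AffineMap.lineMap c y s)) :
    u (AffineMap.lineMap c y t) ≤ t * u y := by
  have hpos (s : ℝ) (hs : s ∈ Icc 1 t) : 0 < s := one_pos.trans_le hs.1
  have hderiv (s : ℝ) (hs : s ∈ Icc 1 t) : HasDerivAt (fun s => u (AffineMap.lineMap c y s) / s)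
      ((fderiv ℝ u (AffineMap.lineMap c y s) (y - c) * s - u (AffineMap.lineMap c y s) * 1) /
        s ^ 2) s :=
    ((hu s hs).hasFDerivAt.comp_hasDerivAt s AffineMap.hasDerivAt_lineMap).div (hasDerivAt_id s)
      (hpos s hs).ne'
  have hanti : AntitoneOn (fun s => u (AffineMap.lineMap c y s) / s) (Icc 1 t) := by
    refine antitoneOn_of_hasDerivWithinAt_nonpos (convex_Icc 1 t)
      (fun s hs => (hderiv s hs).continuousAt.continuousWithinAt)
      (fun s hs => (hderiv s (interior_subset hs)).hasDerivWithinAt) fun s hs => ?_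
    have hs' := hradial s (interior_subset hs)
    rw [← vsub_eq_sub, AffineMap.lineMap_vsub_left, map_smul, smul_eq_mul, vsub_eq_sub] at hs'
    exact div_nonpos_of_nonpos_of_nonneg (by linarith) (sq_nonneg s)
  have hle := hanti (left_mem_Icc.2 ht) (right_mem_Icc.2 ht) ht
  simp only [AffineMap.lineMap_apply_one, div_one] at hle
  rwa [div_le_iff₀' (hpos t (right_mem_Icc.2 ht))] at hle

variable {F : Type*} [NormedAddCommGroup F] [InnerProductSpace ℝ F] {u : F → ℝ} {c y : F} {r : ℝ}

lemma kelvinTransform_le_of_convex {S : Set F} (hy : y ≠ c) (hyr : dist y c ≤ r)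
    (hS : Convex ℝ S) (hu : ∀ z ∈ S, DifferentiableAt ℝ u z)
    (hradial : ∀ z ∈ S, fderiv ℝ u z (z - c) ≤ u z) (hyS : y ∈ S) (hinv : inversion c r y ∈ S) :
    kelvinTransform c r u y ≤ u y := by
  have hdist : 0 < dist y c := dist_pos.2 hy
  have hr : 0 < r := hdist.trans_le hyr
  have ht : 1 ≤ (r / dist y c) ^ 2 := one_le_pow₀ ((one_le_div hdist).2 hyr)
  have hmem : Icc 1 ((r / dist y c) ^ 2) ⊆ AffineMap.lineMap c y ⁻¹' S :=
    ((hS.affine_preimage (AffineMap.lineMap c y)).ordConnected).out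
      (by simpa using hyS) (by simpa [EuclideanGeometry.inversion_eq_lineMap] using hinv)
  have hle := apply_lineMap_le_mul ht (fun s hs => hu _ (hmem hs)) fun s hs => hradial _ (hmem hs)
  calc kelvinTransform c r u y
      = (dist y c / r) ^ 2 * u (AffineMap.lineMap c y ((r / dist y c) ^ 2)) := rfl
    _ ≤ (dist y c / r) ^ 2 * ((r / dist y c) ^ 2 * u y) := by gcongr
    _ = u y := by field_simp

lemma exists_forall_kelvinTransform_le_mul_sq [ProperSpace F] {ρ : ℝ}
    (hkelvin : Continuous (kelvinTransform c 1 u)) (hρ : 0 < ρ) :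
    ∃ K : ℝ, ∀ r ≠ 0, ∀ y, ρ ≤ dist (inversion c r y) c → kelvinTransform c r u y ≤ K * r ^ 2 := by
  obtain ⟨K, hK⟩ := ((isCompact_closedBall c ρ⁻¹).image hkelvin).bddAbove
  refine ⟨K, fun r hr y hy => ?_⟩
  rw [kelvinTransform_eq_sq_mul hr, mul_comm]
  gcongr
  refine hK (mem_image_of_mem _ ?_)
  rw [mem_closedBall, dist_lineMap_left, norm_inv, norm_pow, Real.norm_eq_abs, sq_abs,
    dist_comm c y]
  rw [dist_inversion_center] at hy
  calc (r ^ 2)⁻¹ * dist y c = (r ^ 2 / dist y c)⁻¹ := by rw [inv_div, div_eq_inv_mul]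
    _ ≤ ρ⁻¹ := inv_anti₀ hρ hy

lemma eventually_forall_kelvinTransform_le_of_pos [ProperSpace F] (hu : ContDiffAt ℝ 2 u c)
    (hpos : 0 < u c) (hkelvin : Continuous (kelvinTransform c 1 u)) :
    ∀ᶠ r in 𝓝[>] 0, ∀ y ∈ ball c r, kelvinTransform c r u y ≤ u y := by
  have hradial : ContinuousAt (fun y => fderiv ℝ u y (y - c)) c :=
    (differentiableAt_fderiv_of_contDiffAt hu).continuousAt.clm_apply
      (continuousAt_id.sub continuousAt_const)
  have hnear : ∀ᶠ y in 𝓝 c,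
      DifferentiableAt ℝ u y ∧ fderiv ℝ u y (y - c) ≤ u y ∧ u c / 2 ≤ u y := by
    filter_upwards [hu.eventually (by simp), hradial.eventually_le_const (u := u c / 2) (by simpa),
      hu.continuousAt.eventually_const_le (half_lt_self hpos)] with y huy hleft hright
    exact ⟨huy.differentiableAt two_ne_zero, hleft.trans hright, hright⟩
  obtain ⟨ρ, hρ, hball⟩ := nhds_basis_closedBall.eventually_iff.1 hnear
  obtain ⟨K, hK⟩ := exists_forall_kelvinTransform_le_mul_sq hkelvin hρ
  have hsmall : ∀ᶠ r : ℝ in 𝓝 0, K * r ^ 2 < u c / 2 :=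
    (by fun_prop : ContinuousAt (fun r : ℝ => K * r ^ 2) 0).eventually_lt_const (by simpa)
  filter_upwards [nhdsWithin_le_nhds hsmall, nhdsWithin_le_nhds (Iio_mem_nhds hρ),
    self_mem_nhdsWithin] with r hKr hrρ hr y hy
  have hyρ : y ∈ closedBall c ρ := (mem_ball.1 hy).le.trans (le_of_lt hrρ)
  rcases eq_or_ne y c with rfl | hyc
  · simpa using hpos.le
  rcases le_total (dist (inversion c r y) c) ρ with hin | hout
  · exact kelvinTransform_le_of_convex hyc (mem_ball.1 hy).le (convex_closedBall c ρ)
      (fun z hz => (hball hz).1) (fun z hz => (hball hz).2.1) hyρ hin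
  · exact (hK r (ne_of_gt hr) y hout).trans (hKr.le.trans (hball hyρ).2.2)

lemma eventually_kelvinTransform_le_of_fderiv_lt {x : F} (hx : x ∈ sphere c r) (hr : r ≠ 0)
    (hu : ContDiffAt ℝ 2 u x) (hlt : fderiv ℝ u x (x - c) < u x) :
    ∀ᶠ q : ℝ × F in 𝓝 (r, x), q.2 ∈ ball c q.1 → kelvinTransform c q.1 u q.2 ≤ u q.2 := by
  have hxc : x ≠ c := ne_of_mem_sphere hx hr
  have hradial : ContinuousAt (fun y => fderiv ℝ u y (y - c)) x :=
    (differentiableAt_fderiv_of_contDiffAt hu).continuousAt.clm_apply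
      (continuousAt_id.sub continuousAt_const)
  have hnear : ∀ᶠ y in 𝓝 x, y ≠ c ∧ DifferentiableAt ℝ u y ∧ fderiv ℝ u y (y - c) ≤ u y := by
    filter_upwards [hu.eventually (by simp), hradial.eventually_lt hu.continuousAt hlt,
      isOpen_ne.mem_nhds hxc] with y huy hle hyc
    exact ⟨hyc, huy.differentiableAt two_ne_zero, hle.le⟩
  obtain ⟨δ, hδ, hball⟩ := nhds_basis_ball.eventually_iff.1 hnear
  have hinv : Tendsto (fun q : ℝ × F => inversion c q.1 q.2) (𝓝 (r, x)) (𝓝 x) := by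
    simpa only [inversion_of_mem_sphere hx] using
      (tendsto_const_nhds (x := c)).inversion continuousAt_fst.tendsto
        (continuousAt_snd (p := (r, x))).tendsto hxc
  filter_upwards [hinv (ball_mem_nhds x hδ), continuousAt_snd (ball_mem_nhds x hδ)]
    with q hinvq hq hqr
  exact kelvinTransform_le_of_convex (hball hq).1 (mem_ball.1 hqr).le (convex_ball x δ)
    (fun z hz => (hball hz).2.1) (fun z hz => (hball hz).2.2) hq hinvq

lemma kelvinTransform_le_of_mem_closure (hkelvin : Continuous (kelvinTransform c 1 u)) (hr : r ≠ 0)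
    (hclosure : r ∈ closure {s | ∀ y ∈ ball c s, kelvinTransform c s u y ≤ u y}) :
    ∀ y ∈ ball c r, kelvinTransform c r u y ≤ u y := by
  by_contra! ⟨y, hy, hlt⟩
  have hcont : ContinuousAt (fun s => kelvinTransform c s u y) r :=
    (continuousAt_kelvinTransform_uncurry hkelvin hr y).comp (f := fun s => (s, y)) (by fun_prop)
  obtain ⟨s, hs, hlts, hys⟩ := ((mem_closure_iff_frequently.1 hclosure).and_eventually
    ((hcont.eventually_const_lt hlt).and (eventually_gt_nhds hy))).exists
  exact hlts.not_ge (hs y hys)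

end RadialComparison

section MovingSpheres

open EuclideanGeometry (inversion)

variable {n k : ℕ} {σ R r : ℝ} {c x : EuclideanSpace ℝ (Fin n)} {u : EuclideanSpace ℝ (Fin n) → ℝ}

/-- A continuous function which, where it is positive, is a `C²` solution of the constant
`σ_k`-curvature equation `σ_k(u ∇²u - ½|∇u|² I) = σ` in the closed sense: instead of membership
in `Γ_k⁺` only monotonicity of `σ_k` is required, a condition which survives limits. -/
structure IsSigmaKSolution (k : ℕ) (σ : ℝ) (u : EuclideanSpace ℝ (Fin n) → ℝ) : Prop where
  continuous : Continuous u
  contDiffAt : ∀ x, 0 < u x → ContDiffAt ℝ 2 u x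
  sigmaK_eq : ∀ x, 0 < u x → sigmaK k (conformalHessian u x) = σ
  sigmaKMonotoneAt : ∀ x, 0 < u x → SigmaKMonotoneAt k (conformalHessian u x)

namespace IsSigmaKSolution

lemma contDiffAt_kelvinTransform (hu : IsSigmaKSolution k σ u) (hx : x ≠ c)
    (hpos : 0 < kelvinTransform c r u x) : ContDiffAt ℝ 2 (kelvinTransform c r u) x :=
  _root_.contDiffAt_kelvinTransform hx
    (hu.contDiffAt _ (pos_of_mul_pos_right hpos (sq_nonneg _)))

lemma fderiv_apply_lt_fderiv_kelvinTransform_apply (hu : IsSigmaKSolution k σ u) (hk : 1 ≤ k)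
    (hkn : k ≤ n) (hr : r ≠ 0) (hx : x ≠ c) (hpos : 0 < u x)
    (hcone : gammaKPlus k (conformalHessian u x)) (heq : kelvinTransform c r u x = u x)
    (hlt : ∀ y ∈ ball c (dist x c), kelvinTransform c r u y < u y) :
    fderiv ℝ u x (x - c) < fderiv ℝ (kelvinTransform c r u) x (x - c) := by
  have hposinv : 0 < u (inversion c r x) :=
    pos_of_mul_pos_right (heq.symm ▸ hpos : 0 < kelvinTransform c r u x) (sq_nonneg _)
  have hnear : ∀ᶠ y in 𝓝 x, y ≠ c ∧ 0 < u y ∧ 0 < u (inversion c r y) := by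
    filter_upwards [isOpen_ne.mem_nhds hx, hu.continuous.continuousAt.eventually_const_lt hpos,
      (hu.continuous.continuousAt.comp (contDiffAt_inversion hx).continuousAt).eventually_const_lt
        hposinv] with y hyc hy hinvy
    exact ⟨hyc, hy, hinvy⟩
  refine fderiv_apply_lt_of_lt_on_ball hk hkn (dist_pos.2 hx) (mem_sphere.2 rfl)
    (hu.contDiffAt x hpos) (_root_.contDiffAt_kelvinTransform hx (hu.contDiffAt _ hposinv)) hpos heq
    hcone ?_ ?_ hlt
  · filter_upwards [hnear] with y hy
    rw [sigmaK_conformalHessian_kelvinTransform hr hy.1 (hu.contDiffAt _ hy.2.2),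
      hu.sigmaK_eq _ hy.2.2, hu.sigmaK_eq _ hy.2.1]
  · filter_upwards [hnear] with y hy
    exact sigmaKMonotoneAt_conformalHessian_kelvinTransform hr hy.1 (hu.contDiffAt _ hy.2.2)
      (hu.sigmaKMonotoneAt _ hy.2.2)

lemma fderiv_apply_lt_of_kelvinTransform_lt (hu : IsSigmaKSolution k σ u) (hk : 1 ≤ k)
    (hkn : k ≤ n) (hr : r ≠ 0) (hx : x ∈ sphere c r) (hpos : 0 < u x)
    (hcone : gammaKPlus k (conformalHessian u x))
    (hlt : ∀ y ∈ ball c r, kelvinTransform c r u y < u y) : fderiv ℝ u x (x - c) < u x := by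
  have hhopf := hu.fderiv_apply_lt_fderiv_kelvinTransform_apply hk hkn hr
    (ne_of_mem_sphere hx hr) hpos hcone (kelvinTransform_of_mem_sphere hr hx)
    (by rwa [mem_sphere.1 hx])
  rw [fderiv_kelvinTransform_apply_of_mem_sphere hr hx
    ((hu.contDiffAt x hpos).differentiableAt two_ne_zero)] at hhopf
  linarith

lemma kelvinTransform_lt_of_le (hu : IsSigmaKSolution k σ u) (hk : 1 ≤ k) (hkn : k ≤ n)
    (hkelvin : Continuous (kelvinTransform c 1 u)) (hr : r ≠ 0) (hpos : ∀ y ∈ ball c r, 0 < u y)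
    (hcone : ∀ y ∈ ball c r, gammaKPlus k (conformalHessian u y))
    (hle : ∀ y ∈ ball c r, kelvinTransform c r u y ≤ u y) :
    ∀ y ∈ ball c r, kelvinTransform c r u y < u y := by
  by_contra! ⟨y, hyr, hy⟩
  have hcompact : IsCompact (closedBall c (dist y c) ∩ {z | u z ≤ kelvinTransform c r u z}) :=
    (isCompact_closedBall _ _).inter_right
      (isClosed_le hu.continuous (continuous_kelvinTransform hkelvin hr))
  obtain ⟨z, ⟨hzy, hz⟩, hmin⟩ := hcompact.exists_isMinOn ⟨y, le_refl (dist y c), hy⟩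
    (continuous_id.dist continuous_const).continuousOn (f := fun z => dist z c)
  have hzr : z ∈ ball c r := (mem_closedBall.1 hzy).trans_lt hyr
  have hzc : z ≠ c := by
    rintro rfl
    exact (hpos z hzr).not_ge (by simpa using hz)
  have heq : kelvinTransform c r u z = u z := le_antisymm (hle z hzr) hz
  have hlt (a) (ha : a ∈ ball c (dist z c)) : kelvinTransform c r u a < u a := by
    by_contra! hcontact
    exact (mem_ball.1 ha).not_ge (hmin ⟨(mem_ball.1 ha).le.trans hzy, hcontact⟩)
  have hhopf := hu.fderiv_apply_lt_fderiv_kelvinTransform_apply hk hkn hr hzc (hpos z hzr)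
    (hcone z hzr) heq hlt
  have hlocal : IsLocalMin (fun a => u a - kelvinTransform c r u a) z := by
    filter_upwards [isOpen_ball.mem_nhds hzr] with a ha
    rw [heq, sub_self]
    exact sub_nonneg.2 (hle a ha)
  have hderiv := hlocal.fderiv_eq_zero
  rw [fderiv_fun_sub ((hu.contDiffAt z (hpos z hzr)).differentiableAt two_ne_zero)
    ((hu.contDiffAt_kelvinTransform hzc (heq ▸ hpos z hzr)).differentiableAt two_ne_zero),
    sub_eq_zero] at hderiv
  exact hhopf.ne (congrArg (fun f => f (z - c)) hderiv)

lemma eventually_forall_kelvinTransform_le (hu : IsSigmaKSolution k σ u) (hk : 1 ≤ k)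
    (hkn : k ≤ n) (hkelvin : Continuous (kelvinTransform c 1 u))
    (hpos : ∀ y ∈ ball c R, 0 < u y)
    (hcone : ∀ y ∈ ball c R, gammaKPlus k (conformalHessian u y)) (hr : r ≠ 0) (hrR : r < R)
    (hle : ∀ y ∈ ball c r, kelvinTransform c r u y ≤ u y) :
    ∀ᶠ s in 𝓝 r, ∀ y ∈ ball c s, kelvinTransform c s u y ≤ u y := by
  have hlt := hu.kelvinTransform_lt_of_le hk hkn hkelvin hr
    (fun y hy => hpos y (ball_subset_ball hrR.le hy))
    (fun y hy => hcone y (ball_subset_ball hrR.le hy)) hle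
  have hcompact : ∀ᶠ s in 𝓝 r, ∀ y ∈ closedBall c R, y ∈ ball c s →
      kelvinTransform c s u y ≤ u y := by
    refine (isCompact_closedBall c R).eventually_forall_of_forall_eventually fun y _ => ?_
    rcases lt_trichotomy (dist y c) r with hin | hon | hout
    · filter_upwards [(continuousAt_kelvinTransform_uncurry hkelvin hr y).eventually_lt
        (hu.continuous.continuousAt.comp continuousAt_snd) (hlt y hin)] with q hq _
      exact hq.le
    · have hyR : y ∈ ball c R := hon.trans_lt hrR
      exact eventually_kelvinTransform_le_of_fderiv_lt hon hr (hu.contDiffAt y (hpos y hyR))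
        (hu.fderiv_apply_lt_of_kelvinTransform_lt hk hkn hr hon (hpos y hyR) (hcone y hyR) hlt)
    · filter_upwards [continuousAt_fst.eventually_lt
        ((continuousAt_snd (p := (r, y))).dist continuousAt_const) hout] with q hq hqr
      exact absurd (mem_ball.1 hqr) hq.not_gt
  filter_upwards [hcompact, eventually_lt_nhds hrR] with s hs hsR y hy
  exact hs y ((mem_ball.1 hy).trans hsR).le hy

theorem fderiv_apply_lt_of_mem_sphere (hu : IsSigmaKSolution k σ u) (hk : 1 ≤ k) (hkn : k ≤ n)
    (hkelvin : Continuous (kelvinTransform c 1 u)) (hR : 0 < R)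
    (hpos : ∀ y ∈ closedBall c R, 0 < u y)
    (hcone : ∀ y ∈ ball c R, gammaKPlus k (conformalHessian u y))
    (hx : x ∈ sphere c R) (hconex : gammaKPlus k (conformalHessian u x)) :
    fderiv ℝ u x (x - c) < u x := by
  have hposball (y) (hy : y ∈ ball c R) : 0 < u y := hpos y (ball_subset_closedBall hy)
  have hposc : 0 < u c := hposball c (mem_ball_self hR)
  obtain ⟨a, hstart, ha, haR⟩ : ∃ a, (∀ y ∈ ball c a, kelvinTransform c a u y ≤ u y) ∧
      a ∈ Ioc 0 R := ((eventually_forall_kelvinTransform_le_of_pos (hu.contDiffAt c hposc) hposc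
    hkelvin).and (Ioc_mem_nhdsGT hR)).exists
  have hclosed : IsClosed ({s | ∀ y ∈ ball c s, kelvinTransform c s u y ≤ u y} ∩ Icc a R) := by
    refine isClosed_of_closure_subset fun s hs => ?_
    have hsI : s ∈ Icc a R := closure_minimal inter_subset_right isClosed_Icc hs
    exact ⟨kelvinTransform_le_of_mem_closure hkelvin (ha.trans_le hsI.1).ne'
      (closure_mono inter_subset_left hs), hsI⟩
  have hIcc := hclosed.Icc_subset_of_forall_exists_gt hstart fun s hs t hst =>
    (((hu.eventually_forall_kelvinTransform_le hk hkn hkelvin hposball hcone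
      (ha.trans_le hs.2.1).ne' hs.2.2 hs.1).filter_mono nhdsWithin_le_nhds).and
        (Ioc_mem_nhdsGT hst)).exists
  exact hu.fderiv_apply_lt_of_kelvinTransform_lt hk hkn hR.ne' hx
    (hpos x (sphere_subset_closedBall hx)) hconex
    (hu.kelvinTransform_lt_of_le hk hkn hkelvin hR.ne' hposball hcone
      (hIcc (right_mem_Icc.2 haR)))

end IsSigmaKSolution

end MovingSpheres

section SchoutenMatrix

lemma fderiv_fderiv_rpow_const_apply {E : Type*} [NormedAddCommGroup E] [NormedSpace ℝ E]
    {v : E → ℝ} {x : E} (hv : ContDiffAt ℝ 2 v x) (hpos : 0 < v x) (β : ℝ) (a b : E) :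
    fderiv ℝ (fderiv ℝ fun y => v y ^ β) x a b =
      β * (β - 1) * v x ^ (β - 2) * fderiv ℝ v x a * fderiv ℝ v x b +
        β * v x ^ (β - 1) * fderiv ℝ (fderiv ℝ v) x a b := by
  have hgrad : (fderiv ℝ fun y => v y ^ β) =ᶠ[𝓝 x] fun y => (β * v y ^ (β - 1)) • fderiv ℝ v y := by
    filter_upwards [hv.eventually (by simp), hv.continuousAt.eventually_const_lt hpos] with y hvy hy
    exact ((hvy.differentiableAt two_ne_zero).hasFDerivAt.rpow_const (Or.inl hy.ne')).fderiv
  have hfactor := ((hv.differentiableAt two_ne_zero).hasFDerivAt.rpow_const (p := β - 1)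
    (Or.inl hpos.ne')).const_mul β
  have hderiv : HasFDerivAt (fun y => (β * v y ^ (β - 1)) • fderiv ℝ v y) _ x :=
    hfactor.smul (differentiableAt_fderiv_of_contDiffAt hv).hasFDerivAt
  rw [hgrad.fderiv_eq, hderiv.fderiv, show β - 2 = β - 1 - 1 by ring]
  simp only [add_apply, smul_apply, ContinuousLinearMap.smulRight_apply, smul_eq_mul]
  ring

variable {n : ℕ} {u v w : EuclideanSpace ℝ (Fin n) → ℝ} {x : EuclideanSpace ℝ (Fin n)}

lemma conformalHessian_congr (h : u =ᶠ[𝓝 x] w) : conformalHessian u x = conformalHessian w x := by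
  rw [conformalHessian, conformalHessian, h.fderiv.fderiv_eq, h.fderiv_eq, h.eq_of_nhds]

lemma norm_fderiv_sq_eq_sum_pd_sq (v : EuclideanSpace ℝ (Fin n) → ℝ)
    (x : EuclideanSpace ℝ (Fin n)) : ‖fderiv ℝ v x‖ ^ 2 = ∑ i, pd v i x ^ 2 := by
  have hpd (i : Fin n) : pd v i x = gradient v x i := by
    rw [pd, ← inner_gradient_left, EuclideanSpace.inner_single_right]
    simp
  have hnorm : ‖fderiv ℝ v x‖ = ‖gradient v x‖ := by simp [gradient]
  rw [hnorm, EuclideanSpace.norm_sq_eq]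
  simp [hpd]

lemma pd_pd_eq_fderiv_fderiv (hv : ContDiffAt ℝ 2 v x) (i j : Fin n) :
    pd (pd v j) i x =
      fderiv ℝ (fderiv ℝ v) x (EuclideanSpace.single i 1) (EuclideanSpace.single j 1) := by
  rw [pd, show pd v j = fun y => fderiv ℝ v y (EuclideanSpace.single j 1) from rfl,
    (hasFDerivAt_fderiv_apply hv _).fderiv, ContinuousLinearMap.flip_apply]

lemma conformalHessian_rpow (hn : 3 ≤ n) (hv : ContDiffAt ℝ 2 v x) (hpos : 0 < v x) :
    conformalHessian (fun y => v y ^ (-2 / ((n : ℝ) - 2))) x =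
      ((v x ^ (-2 / ((n : ℝ) - 2))) ^ 2) • schoutenMatrix v x := by
  have hn2 : (n : ℝ) - 2 ≠ 0 := by
    have : (3 : ℝ) ≤ n := by exact_mod_cast hn
    linarith
  ext i j
  rw [conformalHessian_apply, fderiv_fderiv_rpow_const_apply hv hpos,
    ((hv.differentiableAt two_ne_zero).hasFDerivAt.rpow_const (Or.inl hpos.ne')).fderiv, norm_smul,
    mul_pow, norm_fderiv_sq_eq_sum_pd_sq, Real.norm_eq_abs, sq_abs, Matrix.smul_apply,
    schoutenMatrix, pd_pd_eq_fderiv_fderiv hv, Real.rpow_sub hpos, Real.rpow_sub hpos,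
    Real.rpow_one, Real.rpow_two, smul_eq_mul]
  simp only [pd]
  field_simp
  ring

end SchoutenMatrix

section KelvinTransformAtInfinity

open EuclideanGeometry (inversion)

lemma dist_isBigO_dist_cobounded {X : Type*} [PseudoMetricSpace X] (p q : X) :
    (fun z => dist z p) =O[Bornology.cobounded X] fun z => dist z q := by
  refine Asymptotics.IsBigO.of_bound 2 ?_
  filter_upwards [((tendsto_dist_right_atTop_iff q).2 tendsto_id).eventually_ge_atTop (dist q p)]
    with z hz
  simp only [id_eq] at hz
  rw [Real.norm_of_nonneg dist_nonneg, Real.norm_of_nonneg dist_nonneg]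
  linarith [dist_triangle z q p]

variable {F : Type*} [NormedAddCommGroup F] [InnerProductSpace ℝ F] {c p x : F} {r : ℝ}
  {u U : F → ℝ}

lemma continuousAt_kelvinTransform (hx : x ≠ c) (hu : ContinuousAt u (inversion c r x)) :
    ContinuousAt (kelvinTransform c r u) x :=
  (((continuous_id.dist continuous_const).div_const r).pow 2).continuousAt.mul
    (hu.comp (contDiffAt_inversion hx).continuousAt)

lemma continuous_kelvinTransform_of_isLittleO (hr : r ≠ 0) (hu : Continuous u)
    (hlittle : u =o[Bornology.cobounded F] fun z => dist z c ^ 2) :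
    Continuous (kelvinTransform c r u) := by
  refine continuous_iff_continuousAt.2 fun x => ?_
  rcases eq_or_ne x c with rfl | hx
  · have hlim : Tendsto (fun y => r ^ 2 * (u (inversion x r y) / dist (inversion x r y) x ^ 2))
        (𝓝[≠] x) (𝓝 (r ^ 2 * 0)) :=
      (hlittle.tendsto_div_nhds_zero.comp
        (EuclideanGeometry.tendsto_inversion_nhdsNE_center_cobounded hr)).const_mul _
    rw [continuousAt_iff_punctured_nhds, kelvinTransform_center, ← mul_zero (r ^ 2)]
    refine hlim.congr' ?_
    filter_upwards [self_mem_nhdsWithin] with y hy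
    have hdist : dist y x ≠ 0 := dist_ne_zero.2 hy
    rw [kelvinTransform, EuclideanGeometry.dist_inversion_center]
    field_simp
  · exact continuousAt_kelvinTransform hx hu.continuousAt

lemma tendsto_inversion_cobounded_nhds_center (c : F) (r : ℝ) :
    Tendsto (inversion c r) (Bornology.cobounded F) (𝓝 c) := by
  rw [tendsto_iff_dist_tendsto_zero]
  simp only [EuclideanGeometry.dist_inversion_center]
  exact ((tendsto_dist_right_atTop_iff c).2 tendsto_id).const_div_atTop _

lemma kelvinTransform_isLittleO_cobounded (hu : ContinuousAt u p) (hzero : u p = 0) :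
    kelvinTransform p r u =o[Bornology.cobounded F] fun z => dist z p ^ 2 := by
  have hlim : Tendsto (fun z => (r ^ 2)⁻¹ * u (inversion p r z)) (Bornology.cobounded F)
      (𝓝 0) := by
    simpa [hzero] using
      (hu.tendsto.comp (tendsto_inversion_cobounded_nhds_center p r)).const_mul (r ^ 2)⁻¹
  have hmul := (Asymptotics.isBigO_refl (fun z => dist z p ^ 2)
    (Bornology.cobounded F)).mul_isLittleO ((Asymptotics.isLittleO_one_iff ℝ).2 hlim)
  refine hmul.congr (fun z => ?_) fun z => mul_one _
  rw [kelvinTransform, div_pow, div_eq_mul_inv, mul_assoc]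

lemma continuous_kelvinTransform_of_eqOn (hU : Continuous U)
    (heq : EqOn U (kelvinTransform p r u) {p}ᶜ) (hu : ContinuousAt u p) (hzero : u p = 0)
    {s : ℝ} (hs : s ≠ 0) (q : F) : Continuous (kelvinTransform q s U) := by
  have hnear : U =ᶠ[Bornology.cobounded F] kelvinTransform p r u :=
    heq.eventuallyEq_of_mem (Bornology.isBounded_def.1 Bornology.isBounded_singleton)
  exact continuous_kelvinTransform_of_isLittleO hs hU
    ((hnear.trans_isLittleO (kelvinTransform_isLittleO_cobounded hu hzero)).trans_isBigO
      ((dist_isBigO_dist_cobounded p q).pow 2))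

lemma dist_inversion_dist (hx : x ≠ p) (q : F) :
    dist (inversion p (dist q p) x) q = dist q p / dist x p * dist x q := by
  rcases eq_or_ne q p with rfl | hq
  · simp
  · have hdist : dist q p ≠ 0 := dist_ne_zero.2 hq
    have hinv := EuclideanGeometry.dist_inversion_inversion hx hq (dist q p)
    rw [EuclideanGeometry.inversion_dist_center] at hinv
    rw [hinv]
    field_simp

lemma dist_inversion_le_dist_inversion {q : F} (hx : x ≠ p) (hxq : dist x q ≤ dist q p) :
    dist (inversion p (dist q p) x) q ≤ dist (inversion p (dist q p) x) p := by
  have hxp : 0 < dist x p := dist_pos.2 hx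
  rw [dist_inversion_dist hx, EuclideanGeometry.dist_inversion_center, div_mul_eq_mul_div, sq]
  gcongr

lemma fderiv_kelvinTransform_apply_sub {q : F} (hx : x ∈ sphere q (dist q p)) (hxp : x ≠ p)
    (hu : DifferentiableAt ℝ u (inversion p (dist q p) x)) :
    fderiv ℝ (kelvinTransform p (dist q p) u) x (x - q) =
      kelvinTransform p (dist q p) u x - fderiv ℝ u (inversion p (dist q p) x) (q - p) := by
  have hqp : dist q p ≠ 0 := by
    intro h
    rw [h, sphere_zero, mem_singleton_iff] at hx
    exact hxp (hx.trans (dist_eq_zero.1 h))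
  have hnorm : ‖x - p‖ ≠ 0 := norm_ne_zero_iff.2 (sub_ne_zero.2 hxp)
  have hinner : inner ℝ (x - p) (x - q) = ‖x - p‖ ^ 2 / 2 := by
    have hsphere : ‖(x - p) - (x - q)‖ = ‖x - q‖ := by
      rw [sub_sub_sub_cancel_left, ← dist_eq_norm, ← dist_eq_norm, mem_sphere.1 hx]
    have hexpand := norm_sub_sq_real (x - p) (x - q)
    rw [hsphere] at hexpand
    linarith
  rw [fderiv_kelvinTransform_apply hqp hxp hu, reflection_orthogonal_singleton_apply, hinner,
    show 2 * (‖x - p‖ ^ 2 / 2 / ‖x - p‖ ^ 2) = 1 by field_simp, one_smul, sub_sub_sub_cancel_left,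
    ← neg_sub q p, map_neg, kelvinTransform, ← dist_eq_norm]
  ring

end KelvinTransformAtInfinity

section RemovableSingularity

open EuclideanGeometry (inversion)

namespace IsSigmaKSolution

variable {n k : ℕ} {σ r : ℝ} {p q x : EuclideanSpace ℝ (Fin n)}
  {u U : EuclideanSpace ℝ (Fin n) → ℝ}

lemma of_ne (hk : 1 ≤ k) (hkn : k ≤ n) (hp : ContDiffAt ℝ 2 u p) (hpos : 0 < u p)
    (hcont : ∀ y ≠ p, ContinuousAt u y) (hsmooth : ∀ y ≠ p, 0 < u y → ContDiffAt ℝ 2 u y)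
    (hsigma : ∀ y ≠ p, 0 < u y → sigmaK k (conformalHessian u y) = σ)
    (hmono : ∀ y ≠ p, 0 < u y → SigmaKMonotoneAt k (conformalHessian u y)) :
    IsSigmaKSolution k σ u := by
  have : Nonempty (Fin n) := ⟨⟨0, by lia⟩⟩
  have hlim : Tendsto (conformalHessian u) (𝓝[≠] p) (𝓝 (conformalHessian u p)) :=
    (continuousAt_conformalHessian hp).tendsto.mono_left nhdsWithin_le_nhds
  have hnear : ∀ᶠ y in 𝓝[≠] p, y ≠ p ∧ 0 < u y := by
    filter_upwards [self_mem_nhdsWithin, nhdsWithin_le_nhds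
      (hp.continuousAt.eventually_const_lt hpos)] with y hyp hy
    exact ⟨hyp, hy⟩
  have hsigmap : sigmaK k (conformalHessian u p) = σ := by
    refine tendsto_nhds_unique (((continuous_sigmaK hkn).tendsto _).comp hlim)
      (tendsto_const_nhds.congr' ?_)
    filter_upwards [hnear] with y hy
    exact (hsigma y hy.1 hy.2).symm
  have hmonop : SigmaKMonotoneAt k (conformalHessian u p) :=
    (isClosed_sigmaKMonotoneAt hkn).mem_of_tendsto hlim
      (hnear.mono fun y hy => hmono y hy.1 hy.2)
  refine ⟨continuous_iff_continuousAt.2 fun y => ?_, fun y hy => ?_, fun y hy => ?_,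
    fun y hy => ?_⟩ <;> rcases eq_or_ne y p with rfl | hyp
  exacts [hp.continuousAt, hcont y hyp, hp, hsmooth y hyp hy, hsigmap, hsigma y hyp hy, hmonop,
    hmono y hyp hy]

lemma of_eqOn_kelvinTransform (hu : IsSigmaKSolution k σ u) (hk : 1 ≤ k) (hkn : k ≤ n) (hr : r ≠ 0)
    (hU : EqOn U (kelvinTransform p r u) {p}ᶜ) (hsmooth : ContDiffAt ℝ 2 U p) (hpos : 0 < U p) :
    IsSigmaKSolution k σ U := by
  have heq (y) (hy : y ≠ p) : U =ᶠ[𝓝 y] kelvinTransform p r u :=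
    hU.eventuallyEq_of_mem (isOpen_ne.mem_nhds hy)
  have hpos_inv (y) (hy : y ≠ p) (hUy : 0 < U y) : 0 < u (inversion p r y) :=
    pos_of_mul_pos_right (hU hy ▸ hUy) (sq_nonneg _)
  have hsmooth_inv (y) (hy : y ≠ p) (hUy : 0 < U y) : ContDiffAt ℝ 2 u (inversion p r y) :=
    hu.contDiffAt _ (hpos_inv y hy hUy)
  refine of_ne hk hkn hsmooth hpos (fun y hy => ?_) (fun y hy hUy => ?_) (fun y hy hUy => ?_)
    fun y hy hUy => ?_
  · exact (continuousAt_kelvinTransform hy hu.continuous.continuousAt).congr (heq y hy).symm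
  · exact (_root_.contDiffAt_kelvinTransform hy (hsmooth_inv y hy hUy)).congr_of_eventuallyEq
      (heq y hy)
  · rw [conformalHessian_congr (heq y hy),
      sigmaK_conformalHessian_kelvinTransform hr hy (hsmooth_inv y hy hUy),
      hu.sigmaK_eq _ (hpos_inv y hy hUy)]
  · rw [conformalHessian_congr (heq y hy)]
    exact sigmaKMonotoneAt_conformalHessian_kelvinTransform hr hy (hsmooth_inv y hy hUy)
      (hu.sigmaKMonotoneAt _ (hpos_inv y hy hUy))

theorem fderiv_apply_pos_of_dist_eq (hu : IsSigmaKSolution k σ u) (hk : 1 ≤ k) (hkn : k ≤ n)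
    (hcone : ∀ y, 0 < u y → gammaKPlus k (conformalHessian u y)) (hqp : q ≠ p) (hzero : u p = 0)
    (hpos : ∀ z, dist z q ≤ dist z p → 0 < u z)
    (hU : EqOn U (kelvinTransform p (dist q p) u) {p}ᶜ) (hsmooth : ContDiffAt ℝ 2 U p)
    (hUp : 0 < U p) (hx : dist x q = dist x p) : 0 < fderiv ℝ u x (q - p) := by
  have hr : 0 < dist q p := dist_pos.2 hqp
  have hinv_pos (y) (hy : y ∈ closedBall q (dist q p)) (hyp : y ≠ p) :
      0 < u (inversion p (dist q p) y) :=
    hpos _ (dist_inversion_le_dist_inversion hyp hy)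
  have hUpos (y) (hy : y ∈ closedBall q (dist q p)) : 0 < U y := by
    rcases eq_or_ne y p with rfl | hyp
    · exact hUp
    · rw [hU hyp]
      exact mul_pos (sq_pos_of_pos (div_pos (dist_pos.2 hyp) hr)) (hinv_pos y hy hyp)
  have hUcone (y) (hy : y ∈ closedBall q (dist q p)) (hyp : y ≠ p) :
      gammaKPlus k (conformalHessian U y) := by
    rw [conformalHessian_congr (hU.eventuallyEq_of_mem (isOpen_ne.mem_nhds hyp))]
    exact gammaKPlus_conformalHessian_kelvinTransform hr.ne' hyp
      (hu.contDiffAt _ (hinv_pos y hy hyp)) (hcone _ (hinv_pos y hy hyp))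
  have hxp : x ≠ p := by
    rintro rfl
    exact hqp (dist_eq_zero.1 (by rw [dist_comm, hx, dist_self]))
  set y := inversion p (dist q p) x with hy
  have hyp : y ≠ p := (EuclideanGeometry.inversion_eq_center hr.ne').not.2 hxp
  have hysphere : y ∈ sphere q (dist q p) := by
    rw [mem_sphere, hy, dist_inversion_dist hxp, hx, div_mul_cancel₀ _ (dist_ne_zero.2 hxp)]
  have hyx : inversion p (dist q p) y = x := EuclideanGeometry.inversion_inversion p hr.ne' x
  have hUsol := hu.of_eqOn_kelvinTransform hk hkn hr.ne' hU hsmooth hUp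
  have hmove := hUsol.fderiv_apply_lt_of_mem_sphere hk hkn
    (continuous_kelvinTransform_of_eqOn hUsol.continuous hU hu.continuous.continuousAt hzero
      one_ne_zero q) hr hUpos
    (fun z hz => hUcone z (ball_subset_closedBall hz) ?_) hysphere
    (hUcone y (sphere_subset_closedBall hysphere) hyp)
  · rw [(hU.eventuallyEq_of_mem (isOpen_ne.mem_nhds hyp)).fderiv_eq, hU hyp,
      fderiv_kelvinTransform_apply_sub hysphere hyp, hyx] at hmove
    · linarith
    · rw [hyx]
      exact (hu.contDiffAt x (hpos x hx.le)).differentiableAt two_ne_zero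
  · rintro rfl
    exact (mem_ball.1 hz).ne (dist_comm z q)

end IsSigmaKSolution

end RemovableSingularity

section KelvinExtension

open EuclideanGeometry (inversion)

variable {F : Type*} [NormedAddCommGroup F] [InnerProductSpace ℝ F] {p y : F} {r : ℝ} {u w : F → ℝ}

lemma dist_div_sq_mul_norm_inversion_sq (hr : r ≠ 0) (hy : y ≠ p) :
    (dist y p / r) ^ 2 * ‖inversion p r y‖ ^ 2 =
      r ^ 2 + 2 * inner ℝ p (y - p) + ‖p‖ ^ 2 * (‖y - p‖ / r) ^ 2 := by
  have hnorm : ‖y - p‖ ≠ 0 := norm_ne_zero_iff.2 (sub_ne_zero.2 hy)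
  rw [inversion, vsub_eq_sub, vadd_eq_add, norm_add_sq_real, real_inner_smul_left, norm_smul,
    real_inner_comm, dist_eq_norm, Real.norm_of_nonneg (sq_nonneg _)]
  field_simp

lemma inversion_zero_one_inversion (hr : r ≠ 0) (hy : y ≠ p) :
    inversion 0 1 (inversion p r y) =
      (r ^ 2 + 2 * inner ℝ p (y - p) + ‖p‖ ^ 2 * (‖y - p‖ / r) ^ 2)⁻¹ •
        (y - p + (‖y - p‖ / r) ^ 2 • p) := by
  have hnorm : ‖y - p‖ ≠ 0 := norm_ne_zero_iff.2 (sub_ne_zero.2 hy)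
  have hscale : y - p + (‖y - p‖ / r) ^ 2 • p = (dist y p / r) ^ 2 • inversion p r y := by
    rw [inversion, vsub_eq_sub, vadd_eq_add, smul_add, smul_smul, dist_eq_norm,
      show (‖y - p‖ / r) ^ 2 * (r / ‖y - p‖) ^ 2 = 1 by field_simp, one_smul]
  rw [hscale, ← dist_div_sq_mul_norm_inversion_sq hr hy, smul_smul, inversion, vsub_eq_sub,
    vadd_eq_add, sub_zero, add_zero, dist_zero_right, dist_eq_norm]
  congr 1
  field_simp

lemma exists_eqOn_kelvinTransform_of_eventuallyEq (hr : r ≠ 0) (hw : ContDiffAt ℝ 2 w 0)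
    (hpos : 0 < w 0) (hu : u =ᶠ[Bornology.cobounded F] kelvinTransform 0 1 w) (p : F) :
    ∃ U, EqOn U (kelvinTransform p r u) {p}ᶜ ∧ ContDiffAt ℝ 2 U p ∧ 0 < U p := by
  classical
  set φ : F → ℝ := fun y => r ^ 2 + 2 * inner ℝ p (y - p) + ‖p‖ ^ 2 * (‖y - p‖ / r) ^ 2 with hφ
  set ζ : F → F := fun y => (φ y)⁻¹ • (y - p + (‖y - p‖ / r) ^ 2 • p) with hζ
  have hφp : φ p = r ^ 2 := by simp [hφ]
  have hζp : ζ p = 0 := by simp [hζ]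
  have hsub : ContDiffAt ℝ 2 (fun y => y - p) p := by fun_prop
  have hratio : ContDiffAt ℝ 2 (fun y => (‖y - p‖ / r) ^ 2) p := by
    simpa only [div_pow] using (hsub.norm_sq ℝ).div_const _
  have hφ_smooth : ContDiffAt ℝ 2 φ p :=
    (contDiffAt_const.add (contDiffAt_const.mul (contDiffAt_const.inner ℝ hsub))).add
      (contDiffAt_const.mul hratio)
  have hζ_smooth : ContDiffAt ℝ 2 ζ p :=
    (hφ_smooth.inv (by rw [hφp]; positivity)).smul (hsub.add (hratio.smul contDiffAt_const))
  have hsmooth : ContDiffAt ℝ 2 (fun y => φ y * w (ζ y)) p :=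
    hφ_smooth.mul (ContDiffAt.comp p (by rwa [hζp]) hζ_smooth)
  have hfar : ∀ᶠ y in 𝓝[≠] p, kelvinTransform p r u y = φ y * w (ζ y) := by
    filter_upwards [self_mem_nhdsWithin,
      (EuclideanGeometry.tendsto_inversion_nhdsNE_center_cobounded hr).eventually hu] with y hy huy
    rw [kelvinTransform, huy, kelvinTransform, inversion_zero_one_inversion hr hy, dist_zero_right,
      div_one, ← mul_assoc, dist_div_sq_mul_norm_inversion_sq hr hy]
  refine ⟨Function.update (kelvinTransform p r u) p (φ p * w (ζ p)),
    fun y hy => Function.update_of_ne hy _ _, hsmooth.congr_of_eventuallyEq ?_, ?_⟩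
  · exact eventuallyEq_nhds_of_eventuallyEq_nhdsNE
      ((Function.update_eventuallyEq_nhdsNE _ _ _ _).trans hfar) (Function.update_self ..)
  · rw [Function.update_self, hφp, hζp]
    positivity

variable {n : ℕ} {v : EuclideanSpace ℝ (Fin n) → ℝ}

lemma exists_rpow_eventuallyEq_kelvinTransform (hn : 3 ≤ n) (hv : kelvinExtendsC2PosAtZero v) :
    ∃ w, ContDiffAt ℝ 2 w 0 ∧ 0 < w 0 ∧
      (fun x => v x ^ (-2 / ((n : ℝ) - 2))) =ᶠ[Bornology.cobounded (EuclideanSpace ℝ (Fin n))]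
        kelvinTransform 0 1 w := by
  obtain ⟨w, ε, hε, hw, hw0, hwv⟩ := hv
  have hn2 : (n : ℝ) - 2 ≠ 0 := by
    have : (3 : ℝ) ≤ n := by exact_mod_cast hn
    linarith
  have hw_smooth : ContDiffAt ℝ 2 w 0 := hw.contDiffAt (ball_mem_nhds 0 hε)
  have hinv := tendsto_inversion_cobounded_nhds_center (0 : EuclideanSpace ℝ (Fin n)) 1
  refine ⟨fun y => w y ^ (-2 / ((n : ℝ) - 2)), hw_smooth.rpow_const_of_ne hw0.ne',
    Real.rpow_pos_of_pos hw0 _, ?_⟩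
  filter_upwards [hinv.eventually (ball_mem_nhds 0 hε),
    hinv.eventually (hw_smooth.continuousAt.eventually_const_lt hw0),
    Bornology.isBounded_def.1 (Bornology.isBounded_singleton (x := 0))] with x hxε hwx hx
  have hx0 : x ≠ 0 := hx
  have hxpos : 0 < ‖x‖ := norm_pos_iff.2 hx0
  have hnorm : ‖inversion 0 1 x‖ = ‖x‖⁻¹ := by
    simpa using EuclideanGeometry.dist_inversion_center 0 x 1
  have hwx_eq : w (inversion 0 1 x) = ‖x‖ ^ ((n : ℝ) - 2) * v x := by
    have hxx : (‖inversion 0 1 x‖ ^ 2)⁻¹ • inversion 0 1 x = x := by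
      simpa [inversion, smul_smul] using EuclideanGeometry.inversion_inversion 0 one_ne_zero x
    rw [hwv _ hxε ((EuclideanGeometry.inversion_eq_center one_ne_zero).not.2 hx0), hxx, hnorm,
      Real.inv_rpow hxpos.le, ← Real.rpow_neg hxpos.le, neg_sub]
  have hvx : 0 ≤ v x := by
    rw [hwx_eq] at hwx
    exact (pos_of_mul_pos_right hwx (by positivity)).le
  rw [kelvinTransform, hwx_eq, Real.mul_rpow (by positivity) hvx, ← Real.rpow_mul hxpos.le,
    show ((n : ℝ) - 2) * (-2 / ((n : ℝ) - 2)) = -2 by field_simp, Real.rpow_neg hxpos.le,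
    Real.rpow_two, dist_zero_right]
  field_simp

end KelvinExtension

section InvConformalFactor

variable {n k : ℕ} {σ : ℝ} {P : Set (EuclideanSpace ℝ (Fin n))} {p x : EuclideanSpace ℝ (Fin n)}
  {v : EuclideanSpace ℝ (Fin n) → ℝ}

/-- The function `u = v ^ (-2 / (n - 2))`, for which `g_v = u⁻² g_E`, extended by `0` to the set `P`
along which `v` blows up. -/
noncomputable def invConformalFactor (P : Set (EuclideanSpace ℝ (Fin n)))
    (v : EuclideanSpace ℝ (Fin n) → ℝ) : EuclideanSpace ℝ (Fin n) → ℝ :=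
  Pᶜ.indicator fun x => v x ^ (-2 / ((n : ℝ) - 2))

lemma neg_two_div_sub_two_neg (hn : 3 ≤ n) : -2 / ((n : ℝ) - 2) < 0 := by
  have : (3 : ℝ) ≤ n := by exact_mod_cast hn
  exact div_neg_of_neg_of_pos (by norm_num) (by linarith)

lemma invConformalFactor_of_mem (hp : p ∈ P) : invConformalFactor P v p = 0 :=
  indicator_of_notMem (not_not_intro hp) _

lemma invConformalFactor_of_notMem (hx : x ∉ P) :
    invConformalFactor P v x = v x ^ (-2 / ((n : ℝ) - 2)) :=
  indicator_of_mem (mem_compl hx) _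

lemma invConformalFactor_eventuallyEq (hP : IsClosed P) (hx : x ∉ P) :
    invConformalFactor P v =ᶠ[𝓝 x] fun y => v y ^ (-2 / ((n : ℝ) - 2)) :=
  (eqOn_indicator (s := Pᶜ)).eventuallyEq_of_mem (hP.isOpen_compl.mem_nhds hx)

lemma invConformalFactor_pos_iff (hpos : ∀ y ∉ P, 0 < v y) :
    0 < invConformalFactor P v x ↔ x ∉ P := by
  refine ⟨fun h hx => (invConformalFactor_of_mem hx ▸ h).false, fun hx => ?_⟩
  rw [invConformalFactor_of_notMem hx]
  exact Real.rpow_pos_of_pos (hpos x hx) _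

lemma continuous_invConformalFactor (hn : 3 ≤ n) (hP : IsClosed P) (hpos : ∀ y ∉ P, 0 < v y)
    (hcont : ContinuousOn v Pᶜ) (hblow : ∀ p ∈ P, Tendsto v (𝓝[Pᶜ] p) atTop) :
    Continuous (invConformalFactor P v) := by
  refine continuous_iff_continuousAt.2 fun x => ?_
  by_cases hx : x ∈ P
  · have hrpow : Tendsto (fun y => v y ^ (-2 / ((n : ℝ) - 2))) (𝓝[Pᶜ] x) (𝓝 0) := by
      simpa [Function.comp_def] using
        (tendsto_rpow_neg_atTop (neg_pos.2 (neg_two_div_sub_two_neg hn))).comp (hblow x hx)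
    rw [ContinuousAt, invConformalFactor_of_mem hx, ← nhdsWithin_univ x, ← compl_union_self P,
      nhdsWithin_union, tendsto_sup]
    refine ⟨hrpow.congr' ?_, tendsto_const_nhds.congr' ?_⟩ <;>
      filter_upwards [self_mem_nhdsWithin] with y hy
    exacts [(invConformalFactor_of_notMem hy).symm, (invConformalFactor_of_mem hy).symm]
  · exact ((hcont.continuousAt (hP.isOpen_compl.mem_nhds hx)).rpow_const
      (Or.inl (hpos x hx).ne')).congr (invConformalFactor_eventuallyEq hP hx).symm

lemma contDiffAt_invConformalFactor (hP : IsClosed P) (hv : ContDiffAt ℝ 2 v x) (hpos : 0 < v x)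
    (hx : x ∉ P) : ContDiffAt ℝ 2 (invConformalFactor P v) x :=
  (hv.rpow_const_of_ne hpos.ne').congr_of_eventuallyEq (invConformalFactor_eventuallyEq hP hx)

lemma sigmaK_conformalHessian_invConformalFactor (hn : 3 ≤ n) (hP : IsClosed P)
    (hv : ContDiffAt ℝ 2 v x) (hpos : 0 < v x) (hx : x ∉ P) {j : ℕ} (hj : j ≤ n) :
    sigmaK j (conformalHessian (invConformalFactor P v) x) =
      ((v x ^ (-2 / ((n : ℝ) - 2))) ^ 2) ^ j * sigmaK j (schoutenMatrix v x) := by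
  rw [conformalHessian_congr (invConformalFactor_eventuallyEq hP hx),
    conformalHessian_rpow hn hv hpos, sigmaK_smul hj]

lemma gammaKPlus_conformalHessian_invConformalFactor (hn : 3 ≤ n) (hkn : k ≤ n) (hP : IsClosed P)
    (hv : ContDiffAt ℝ 2 v x) (hpos : 0 < v x) (hx : x ∉ P)
    (hcone : gammaKPlus k (schoutenMatrix v x)) :
    gammaKPlus k (conformalHessian (invConformalFactor P v) x) := fun j hj hjk => by
  rw [sigmaK_conformalHessian_invConformalFactor hn hP hv hpos hx (hjk.trans hkn)]
  exact mul_pos (by positivity) (hcone j hj hjk)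

lemma isSigmaKSolution_invConformalFactor (hn : 3 ≤ n) (hk : 1 ≤ k) (hkn : k ≤ n)
    (hP : IsClosed P) (hpos : ∀ y ∉ P, 0 < v y) (hsmooth : ContDiffOn ℝ 2 v Pᶜ)
    (hcone : ∀ y ∉ P, gammaKPlus k (schoutenMatrix v y))
    (hsigma : ∀ y ∉ P, sigmaK k (schoutenMatrix v y) =
      σ * v y ^ (4 * (k : ℝ) / ((n : ℝ) - 2)))
    (hblow : ∀ p ∈ P, Tendsto v (𝓝[Pᶜ] p) atTop) :
    IsSigmaKSolution k σ (invConformalFactor P v) := by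
  have hv (y) (hy : y ∉ P) : ContDiffAt ℝ 2 v y :=
    hsmooth.contDiffAt (hP.isOpen_compl.mem_nhds hy)
  have hu (y) (hy : y ∉ P) := contDiffAt_invConformalFactor hP (hv y hy) (hpos y hy) hy
  refine ⟨continuous_invConformalFactor hn hP hpos hsmooth.continuousOn hblow, fun y hy => ?_,
    fun y hy => ?_, fun y hy => ?_⟩ <;> rw [invConformalFactor_pos_iff hpos] at hy
  · exact hu y hy
  · have hvy := hpos y hy
    rw [sigmaK_conformalHessian_invConformalFactor hn hP (hv y hy) hvy hy hkn, hsigma y hy,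
      mul_left_comm, ← pow_mul, ← Real.rpow_mul_natCast hvy.le, ← Real.rpow_add hvy]
    push_cast
    rw [show -2 / ((n : ℝ) - 2) * (2 * k) + 4 * k / ((n : ℝ) - 2) = 0 by ring, Real.rpow_zero,
      mul_one]
  · exact sigmaKMonotoneAt_of_gammaKPlus hk hkn (isHermitian_conformalHessian (hu y hy))
      (gammaKPlus_conformalHessian_invConformalFactor hn hkn hP (hv y hy) (hpos y hy) hy
        (hcone y hy))

lemma invConformalFactor_eventuallyEq_cobounded (hP : Bornology.IsBounded P) :
    invConformalFactor P v =ᶠ[Bornology.cobounded (EuclideanSpace ℝ (Fin n))]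
      fun y => v y ^ (-2 / ((n : ℝ) - 2)) :=
  (eqOn_indicator (s := Pᶜ)).eventuallyEq_of_mem (Bornology.isBounded_def.1 hP)

lemma fderiv_apply_neg_of_invConformalFactor (hn : 3 ≤ n) (hP : IsClosed P) (hx : x ∉ P)
    (hv : DifferentiableAt ℝ v x) (hpos : 0 < v x) {e : EuclideanSpace ℝ (Fin n)}
    (hu : 0 < fderiv ℝ (invConformalFactor P v) x e) : fderiv ℝ v x e < 0 := by
  rw [(invConformalFactor_eventuallyEq hP hx).fderiv_eq,
    (hv.hasFDerivAt.rpow_const (Or.inl hpos.ne')).fderiv, smul_apply, smul_eq_mul] at hu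
  exact neg_of_mul_pos_right hu (mul_neg_of_neg_of_pos (neg_two_div_sub_two_neg hn)
    (Real.rpow_pos_of_pos hpos _)).le

end InvConformalFactor

section HalfSpace

lemma dist_reflection_orthogonal_singleton_sq {F : Type*} [NormedAddCommGroup F]
    [InnerProductSpace ℝ F] (e p z : F) :
    dist z ((ℝ ∙ e)ᗮ.reflection p) ^ 2 =
      dist z p ^ 2 + 4 * (inner ℝ e p / ‖e‖ ^ 2) * inner ℝ e z := by
  rw [reflection_orthogonal_singleton_apply]
  rcases eq_or_ne e 0 with rfl | he
  · simp
  have hnorm : ‖e‖ ≠ 0 := norm_ne_zero_iff.2 he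
  rw [dist_eq_norm, dist_eq_norm, ← sub_add,
    norm_add_sq_real, real_inner_smul_right, inner_sub_left, norm_smul, mul_pow, Real.norm_eq_abs,
    sq_abs, real_inner_comm e z, real_inner_comm e p]
  field_simp
  ring

variable {n k : ℕ} {σ : ℝ} {e p x : EuclideanSpace ℝ (Fin n)}
  {u w : EuclideanSpace ℝ (Fin n) → ℝ}

theorem IsSigmaKSolution.fderiv_apply_pos_of_inner_eq_zero (hu : IsSigmaKSolution k σ u)
    (hk : 1 ≤ k) (hkn : k ≤ n) (hcone : ∀ y, 0 < u y → gammaKPlus k (conformalHessian u y))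
    (hpos : ∀ z, 0 ≤ inner ℝ e z → 0 < u z) (hep : inner ℝ e p < 0) (hzero : u p = 0)
    (hw : ContDiffAt ℝ 2 w 0) (hwpos : 0 < w 0)
    (huw : u =ᶠ[Bornology.cobounded (EuclideanSpace ℝ (Fin n))] kelvinTransform 0 1 w)
    (hx : inner ℝ e x = 0) : 0 < fderiv ℝ u x e := by
  have he : e ≠ 0 := by
    rintro rfl
    simp at hep
  set t := inner ℝ e p / ‖e‖ ^ 2
  have ht : t < 0 := div_neg_of_neg_of_pos hep (by positivity)
  set q := (ℝ ∙ e)ᗮ.reflection p with hq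
  have hqp : q - p = (-(2 * t)) • e := by
    rw [hq, reflection_orthogonal_singleton_apply, sub_sub_cancel_left, neg_smul]
  have hne : q ≠ p := sub_ne_zero.1 (hqp ▸ smul_ne_zero (by linarith) he)
  have hdist (z) : dist z q ^ 2 = dist z p ^ 2 + 4 * t * inner ℝ e z :=
    dist_reflection_orthogonal_singleton_sq e p z
  obtain ⟨U, hU, hsmooth, hUp⟩ :=
    exists_eqOn_kelvinTransform_of_eventuallyEq (dist_ne_zero.2 hne) hw hwpos huw p
  have hkey : 0 < fderiv ℝ u x (q - p) := by
    refine hu.fderiv_apply_pos_of_dist_eq hk hkn hcone hne hzero (fun z hz => hpos z ?_) hU hsmooth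
      hUp ?_
    · have hsq : dist z q ^ 2 ≤ dist z p ^ 2 := by gcongr
      exact nonneg_of_mul_nonpos_right (by linarith [hdist z] : 4 * t * inner ℝ e z ≤ 0)
        (by linarith)
    · rw [← sq_eq_sq₀ dist_nonneg dist_nonneg, hdist, hx, mul_zero, add_zero]
  rw [hqp, map_smul, smul_eq_mul] at hkey
  exact pos_of_mul_pos_right hkey (by linarith)

end HalfSpace

theorem hyperplane_geodesically_convex_general {n k : ℕ} (hn : 3 ≤ n) (hk : 1 ≤ k) (hkn : k ≤ n)
    {P : Set (EuclideanSpace ℝ (Fin n))} (hP : IsCompact P) (hP_nonempty : P.Nonempty)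
    {e : EuclideanSpace ℝ (Fin n)} (hPneg : ∀ p ∈ P, inner ℝ e p < 0) {σ : ℝ}
    {v : EuclideanSpace ℝ (Fin n) → ℝ} (hv_pos : ∀ x ∉ P, 0 < v x)
    (hv_smooth : ContDiffOn ℝ 2 v Pᶜ) (hv_cone : ∀ x ∉ P, gammaKPlus k (schoutenMatrix v x))
    (hv_eq : ∀ x ∉ P, sigmaK k (schoutenMatrix v x) = σ * v x ^ (4 * (k : ℝ) / ((n : ℝ) - 2)))
    (hkelvin : kelvinExtendsC2PosAtZero v) (hblow : ∀ p ∈ P, Tendsto v (𝓝[Pᶜ] p) atTop)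
    {x : EuclideanSpace ℝ (Fin n)} (hx : inner ℝ e x = 0) :
    fderiv ℝ v x e < 0 ∧ 0 < -(2 / ((n : ℝ) - 2)) * (v x)⁻¹ * fderiv ℝ v x e := by
  have hn2 : 0 < (n : ℝ) - 2 := by
    have : (3 : ℝ) ≤ n := by exact_mod_cast hn
    linarith
  have hnotin (z) (hz : 0 ≤ inner ℝ e z) : z ∉ P := fun h => (hPneg z h).not_ge hz
  have hv (y) (hy : y ∉ P) : ContDiffAt ℝ 2 v y :=
    hv_smooth.contDiffAt (hP.isClosed.isOpen_compl.mem_nhds hy)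
  obtain ⟨p, hp⟩ := hP_nonempty
  obtain ⟨w, hw, hwpos, hvw⟩ := exists_rpow_eventuallyEq_kelvinTransform hn hkelvin
  have hu : 0 < fderiv ℝ (invConformalFactor P v) x e := by
    refine (isSigmaKSolution_invConformalFactor hn hk hkn hP.isClosed hv_pos hv_smooth hv_cone hv_eq
      hblow).fderiv_apply_pos_of_inner_eq_zero hk hkn (fun y hy => ?_)
      (fun z hz => (invConformalFactor_pos_iff hv_pos).2 (hnotin z hz)) (hPneg p hp)
      (invConformalFactor_of_mem hp) hw hwpos
      ((invConformalFactor_eventuallyEq_cobounded hP.isBounded).trans hvw) hx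
    rw [invConformalFactor_pos_iff hv_pos] at hy
    exact gammaKPlus_conformalHessian_invConformalFactor hn hkn hP.isClosed (hv y hy) (hv_pos y hy)
      hy (hv_cone y hy)
  have hxP : x ∉ P := hnotin x hx.ge
  have hvx : 0 < v x := hv_pos x hxP
  have hneg : fderiv ℝ v x e < 0 := fderiv_apply_neg_of_invConformalFactor hn hP.isClosed hxP
    ((hv x hxP).differentiableAt two_ne_zero) hvx hu
  refine ⟨hneg, mul_pos_of_neg_of_neg ?_ hneg⟩
  rw [neg_mul, neg_lt_zero]
  positivity

/-- **Geodesic convexity of the hyperplane `{xₙ = 0}`.**  If all the singular points of `P`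
lie in the open lower half-space, `v` is a positive `C⁴` solution of
`σ_k(A_v) = binom(n,k)(1/2)^k v^{4k/(n-2)}` on `ℝⁿ \ P` in the `Γ_k⁺` cone, the Kelvin transform
of `v` extends to a `C²` function positive at the origin, and `v` blows up at each singular
point, then `∂v/∂xₙ < 0` on the hyperplane `{xₙ = 0}`; in particular the scalar second
fundamental form factor `-(2/(n-2)) v⁻¹ ∂v/∂xₙ` of `{xₙ = 0}` with respect to
`g_v = v^{4/(n-2)} g_E` is positive, i.e. the hyperplane is geodesically convex. -/
theorem hyperplane_geodesically_convex
    (n k : ℕ) (hn : 3 ≤ n) (hk : 1 ≤ k) (hkn : 2 * k < n)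
    (P : Finset (EuclideanSpace ℝ (Fin n))) (hP : P.Nonempty)
    (hPneg : ∀ p ∈ P, p ⟨n - 1, by omega⟩ < 0)
    (v : EuclideanSpace ℝ (Fin n) → ℝ)
    (hv_pos : ∀ x, x ∉ P → 0 < v x)
    (hv_smooth : ContDiffOn ℝ 4 v ((P : Set (EuclideanSpace ℝ (Fin n)))ᶜ))
    (hv_cone : ∀ x, x ∉ P → gammaKPlus k (schoutenMatrix v x))
    (hv_eq : ∀ x, x ∉ P →
      sigmaK k (schoutenMatrix v x) =
        (n.choose k : ℝ) * (1 / 2) ^ k * v x ^ ((4 * (k : ℝ)) / ((n : ℝ) - 2)))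
    (hkelvin : kelvinExtendsC2PosAtZero v)
    (hblow : ∀ p ∈ P,
      Tendsto v (nhdsWithin p ((P : Set (EuclideanSpace ℝ (Fin n)))ᶜ)) atTop) :
    ∀ x : EuclideanSpace ℝ (Fin n), x ⟨n - 1, by omega⟩ = 0 →
      pd v ⟨n - 1, by omega⟩ x < 0 ∧
      0 < -(2 / ((n : ℝ) - 2)) * (v x)⁻¹ * pd v ⟨n - 1, by omega⟩ x := by
  intro x hx
  exact hyperplane_geodesically_convex_general (e := EuclideanSpace.single ⟨n - 1, by lia⟩ 1) hn hk
    (by lia) P.finite_toSet.isCompact hP (by simpa [EuclideanSpace.inner_single_left] using hPneg)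
    hv_pos (hv_smooth.of_le (by norm_num)) hv_cone hv_eq hkelvin hblow
    (by simpa [EuclideanSpace.inner_single_left] using hx)
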